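/- Let N ≥ 1 be an integer. There exist ε > 0 and C > 0 such that the following holds. Let (u,v) be a smooth solution of the Thirring system on [1,∞) × ℝ such that u, v and all their derivatives are Schwartz in x locally uniformly in t, and let f = u(1,·), g = v(1,·). If D := ‖⟨x⟩^{3+N/2} f‖_{H^{N+4}} + ‖⟨x⟩^{3+N/2} g‖_{H^{N+4}} ≤ ε, then for every (t,x) with 1 ≤ t ≤ ⟨x⟩ one has |u(t,x)| + |v(t,x)| ≤ C ⟨x⟩^{−N/2} D. -/

import Mathlib

noncomputable section
open MeasureTheory

/-- Partial derivative in the first (time) variable. -/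
def pt (u : ℝ → ℝ → ℂ) : ℝ → ℝ → ℂ := fun t x => deriv (fun s => u s x) t
/-- Partial derivative in the second (space) variable. -/
def px (u : ℝ → ℝ → ℂ) : ℝ → ℝ → ℂ := fun t x => deriv (fun y => u t y) x

/-- Japanese bracket ⟨x⟩ = (1+x²)^{1/2}. -/
def jb (x : ℝ) : ℝ := Real.sqrt (1 + x ^ 2)

/-- Sobolev norm ‖g‖_{H^k} = (Σ_{j=0}^k ∫ |∂_x^j g|² dx)^{1/2}. -/
def sobNorm (k : ℕ) (f : ℝ → ℂ) : ℝ :=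
  Real.sqrt (∑ j ∈ Finset.range (k + 1), ∫ x : ℝ, ‖deriv^[j] f x‖ ^ 2)

/-- Weighted Sobolev norm ‖⟨x⟩^s f‖_{H^k}. -/
def wSobNorm (s : ℝ) (k : ℕ) (f : ℝ → ℂ) : ℝ :=
  sobNorm k (fun x => ((jb x ^ s : ℝ) : ℂ) * f x)

/-- u, v and all their derivatives are Schwartz in x, locally uniformly in t. -/
def SchwartzLocUnif (u : ℝ → ℝ → ℂ) : Prop :=
  ∀ (a b n : ℕ) (A : ℝ), ∃ C : ℝ, ∀ t ∈ Set.Icc (1 : ℝ) A, ∀ x : ℝ,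
    |x| ^ n * ‖pt^[a] (px^[b] u) t x‖ ≤ C

/-- The Thirring (cubic Dirac) system: (∂_t+∂_x)u = iv + i|v|²u, (∂_t-∂_x)v = iu + i|u|²v
on [1,∞) × ℝ. -/
def Thirring (u v : ℝ → ℝ → ℂ) : Prop :=
  ∀ t x : ℝ, 1 ≤ t →
    pt u t x + px u t x = Complex.I * v t x + Complex.I * (‖v t x‖ ^ 2 : ℝ) * u t x ∧
    pt v t x - px v t x = Complex.I * u t x + Complex.I * (‖u t x‖ ^ 2 : ℝ) * v t x

/-!
In the null coordinates `ρ = x - t + 2`, `η = x + t` the system reads `∂_η u = (i/2)(v + |v|² u)`,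
`∂_ρ v = -(i/2)(u + |u|² v)`, and for `x ≥ 0` the region `1 ≤ t ≤ ⟨x⟩` lies in `1 ≤ ρ ≤ η`, with
`η ≥ ⟨x⟩`. The energy identity with weight `ρ ^ (p + 1) * η ^ m` for the `ρ`-derivatives of order at
most `p` controls the bulk integral of `ρ ^ p * η ^ m * |∂_ρ^{≤ p} v|²`, at the price of the bulk
integral of `ρ ^ (p + 1) * η ^ (m - 1) * |∂_ρ^{≤ p} u|²`. Since the second equation bounds `u` by
one derivative of `v`, this price is paid by the estimate with `(p + 1, m - 1)`: each derivative in
`ρ` is worth one power of `η`, and descending from `(N + 3, 0)` to `(3, N)` gives the weight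
`η ^ N`.

The quadratic part of the energy flux cancels. The cubic part is absorbed by Alinhac's ghost weight
in `η` and by the derivative of `ρ ^ (p + 1)`, as long as the lower order derivatives decay at the
critical rate `(ρ η) ^ (-1 / 2)` with a small constant, which the estimate with `m = 1` improves.
The half-line `x ≤ 0` follows from the symmetry `(u, v)(t, x) ↦ (v, u)(t, -x)`.
-/

namespace Thirring

open Set Filter Topology Asymptotics Finset.HasAntidiagonal
open scoped ContDiff ComplexConjugate SchwartzMap

section Leibniz

variable {A : Type*} [NormedRing A]

/-- The Leibniz product of two jets: if `a` and `b` list the successive derivatives of two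
functions at a point, `leibniz a b` lists those of their product. -/
def leibniz (a b : ℕ → A) (n : ℕ) : A :=
  ∑ ij ∈ antidiagonal n, (n.choose ij.1 : A) * (a ij.1 * b ij.2)

theorem leibniz_zero (a b : ℕ → A) : leibniz a b 0 = a 0 * b 0 := by
  simp [leibniz]

theorem continuous_leibniz {X : Type*} [TopologicalSpace X] {a b : X → ℕ → A}
    (ha : ∀ k, Continuous fun x => a x k) (hb : ∀ k, Continuous fun x => b x k) (n : ℕ) :
    Continuous fun x => leibniz (a x) (b x) n :=
  continuous_finsetSum _ fun _ _ => continuous_const.mul ((ha _).mul (hb _))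

theorem hasDerivWithinAt_leibniz [NormedAlgebra ℝ A] {a b : ℝ → ℕ → A} {s : Set ℝ} {x : ℝ}
    (ha : ∀ k, HasDerivWithinAt (fun t => a t k) (a x (k + 1)) s x)
    (hb : ∀ k, HasDerivWithinAt (fun t => b t k) (b x (k + 1)) s x) (n : ℕ) :
    HasDerivWithinAt (fun t => leibniz (a t) (b t) n) (leibniz (a x) (b x) (n + 1)) s x := by
  have key : leibniz (a x) (b x) (n + 1) = ∑ ij ∈ antidiagonal n,
      (n.choose ij.1 : A) * (a x (ij.1 + 1) * b x ij.2 + a x ij.1 * b x (ij.2 + 1)) := by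
    have := Finset.sum_antidiagonal_choose_succ_mul (fun i j => a x i * b x j) n
    simp only [leibniz, this, mul_add, Finset.sum_add_distrib]
    rw [add_comm]
    congr 1
    refine Finset.sum_congr rfl fun ij hij => ?_
    rw [Nat.choose_symm_of_eq_add (mem_antidiagonal.1 hij).symm]
  rw [key]
  exact HasDerivWithinAt.fun_sum fun ij _ => ((ha ij.1).mul (hb ij.2)).const_mul _

theorem norm_leibniz_mul_le [NormOneClass A] {a b : ℕ → A} {n : ℕ} {x y r S : ℝ} (hr : 0 ≤ r)
    (h : ∀ i j, i + j = n → ‖a i‖ * ‖b j‖ * r ≤ x ^ i * y ^ j * S) :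
    ‖leibniz a b n‖ * r ≤ (x + y) ^ n * S := by
  have hterm : ∀ ij ∈ antidiagonal n, ‖(n.choose ij.1 : A) * (a ij.1 * b ij.2)‖ * r ≤
      n.choose ij.1 • (x ^ ij.1 * y ^ ij.2) * S := fun ij hij => by
    calc _ ≤ n.choose ij.1 * (‖a ij.1‖ * ‖b ij.2‖) * r := by
          gcongr
          refine (norm_mul_le _ _).trans (mul_le_mul ?_ (norm_mul_le _ _) (by positivity)
            (by positivity))
          simpa using Nat.norm_cast_le (α := A) (n.choose ij.1)
      _ = n.choose ij.1 * (‖a ij.1‖ * ‖b ij.2‖ * r) := by ring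
      _ ≤ n.choose ij.1 * (x ^ ij.1 * y ^ ij.2 * S) := by
          exact mul_le_mul_of_nonneg_left (h _ _ (mem_antidiagonal.1 hij)) (Nat.cast_nonneg _)
      _ = _ := by rw [nsmul_eq_mul]; ring
  calc ‖leibniz a b n‖ * r
      ≤ (∑ ij ∈ antidiagonal n, ‖(n.choose ij.1 : A) * (a ij.1 * b ij.2)‖) * r := by
        gcongr
        exact norm_sum_le _ _
    _ ≤ ∑ ij ∈ antidiagonal n, n.choose ij.1 • (x ^ ij.1 * y ^ ij.2) * S := by
        rw [Finset.sum_mul]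
        exact Finset.sum_le_sum hterm
    _ = (x + y) ^ n * S := by
        rw [← Finset.sum_mul, (Commute.all x y).add_pow']

end Leibniz

section Cubic

/-- The jet of the cubic nonlinearity `|a|² b`. -/
def cubic (a b : ℕ → ℂ) : ℕ → ℂ := leibniz (leibniz a fun k => conj (a k)) b

theorem cubic_zero (a b : ℕ → ℂ) : cubic a b 0 = a 0 * conj (a 0) * b 0 := by
  simp only [cubic, leibniz_zero]

theorem continuous_cubic {X : Type*} [TopologicalSpace X] {a b : X → ℕ → ℂ}
    (ha : ∀ k, Continuous fun x => a x k) (hb : ∀ k, Continuous fun x => b x k) (n : ℕ) :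
    Continuous fun x => cubic (a x) (b x) n :=
  continuous_leibniz
    (continuous_leibniz ha fun k => Complex.continuous_conj.comp (ha k)) hb n

theorem hasDerivWithinAt_cubic {a b : ℝ → ℕ → ℂ} {s : Set ℝ} {x : ℝ}
    (ha : ∀ k, HasDerivWithinAt (fun t => a t k) (a x (k + 1)) s x)
    (hb : ∀ k, HasDerivWithinAt (fun t => b t k) (b x (k + 1)) s x) (n : ℕ) :
    HasDerivWithinAt (fun t => cubic (a t) (b t) n) (cubic (a x) (b x) (n + 1)) s x :=
  hasDerivWithinAt_leibniz (hasDerivWithinAt_leibniz ha fun k => (ha k).star) hb n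

theorem norm_cubic_le {a b : ℕ → ℂ} {n : ℕ} {S : ℝ}
    (h : ∀ c d e, c + d + e = n → ‖a c‖ * ‖a d‖ * ‖b e‖ ≤ S) : ‖cubic a b n‖ ≤ 3 ^ n * S := by
  have inner : ∀ i j, i + j = n →
      ‖leibniz a (fun k => conj (a k)) i‖ * ‖b j‖ ≤ 2 ^ i * 1 ^ j * S := fun i j hij => by
    have := norm_leibniz_mul_le (a := a) (b := fun k => conj (a k)) (n := i) (x := 1) (y := 1)
      (S := S) (norm_nonneg (b j)) fun c d hcd => by
        simpa using h c d j (by omega)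
    norm_num at this ⊢
    exact this
  have := norm_leibniz_mul_le (r := 1) zero_le_one fun i j hij => by
    simpa only [mul_one] using inner i j hij
  norm_num at this
  exact this

/-- Freezing the undifferentiated factors `|a₀|²` in front of the top derivative of `b` leaves a
remainder in which `b` is differentiated fewer than `n` times. -/
theorem cubic_sub_leading (a b : ℕ → ℂ) (n : ℕ) :
    cubic a b n - a 0 * conj (a 0) * b n = cubic a (Function.update b n 0) n := by
  rw [sub_eq_iff_eq_add', ← sub_eq_iff_eq_add]
  simp only [cubic, leibniz.eq_1 _ _ n, ← Finset.sum_sub_distrib, ← mul_sub]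
  rw [Finset.sum_eq_single (0, n)]
  · simp [leibniz_zero]
  · rintro ⟨i, j⟩ hij hne
    have : j ≠ n := by
      rintro rfl
      simp_all
    simp [this]
  · simp

end Cubic

section Energy

variable {E : Type*} [NormedAddCommGroup E]

/-- The energy density of order `n` of a jet: the sum of the squares of its entries up to `n`. -/
def energy (a : ℕ → E) (n : ℕ) : ℝ := ∑ k ∈ Finset.range (n + 1), ‖a k‖ ^ 2

theorem energy_nonneg (a : ℕ → E) (n : ℕ) : 0 ≤ energy a n :=
  Finset.sum_nonneg fun _ _ => sq_nonneg _

theorem norm_le_sqrt_energy (a : ℕ → E) {k n : ℕ} (h : k ≤ n) : ‖a k‖ ≤ √(energy a n) :=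
  Real.le_sqrt_of_sq_le <| Finset.single_le_sum (f := fun i => ‖a i‖ ^ 2)
    (fun _ _ => sq_nonneg _) (Finset.mem_range.2 (Nat.lt_succ_of_le h))

theorem norm_sq_add_norm_sq_succ_le_energy (a : ℕ → E) {k n : ℕ} (h : k < n) :
    ‖a k‖ ^ 2 + ‖a (k + 1)‖ ^ 2 ≤ energy a n := by
  have hsub : ({k, k + 1} : Finset ℕ) ⊆ Finset.range (n + 1) := by
    intro i hi
    simp only [Finset.mem_insert, Finset.mem_singleton] at hi
    simp only [Finset.mem_range]
    omega
  have := Finset.sum_le_sum_of_subset_of_nonneg (f := fun i => ‖a i‖ ^ 2) hsub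
    fun _ _ _ => sq_nonneg _
  rwa [Finset.sum_pair (by omega)] at this

theorem energy_le_of_norm_sq_le {a : ℕ → E} {n : ℕ} {M : ℝ} (h : ∀ k ≤ n, ‖a k‖ ^ 2 ≤ M) :
    energy a n ≤ (n + 1) * M := by
  refine (Finset.sum_le_card_nsmul _ _ M fun k hk => h k ?_).trans (by simp)
  exact Nat.le_of_lt_succ (Finset.mem_range.1 hk)

theorem continuous_energy {X : Type*} [TopologicalSpace X] {a : X → ℕ → E}
    (ha : ∀ k, Continuous fun x => a x k) (n : ℕ) : Continuous fun x => energy (a x) n :=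
  continuous_finsetSum _ fun k _ => (ha k).norm.pow 2

variable [InnerProductSpace ℝ E]

/-- The derivative of `energy a n` when the entries of the jet `a` move with velocities `a'`. -/
def energyDeriv (a a' : ℕ → E) (n : ℕ) : ℝ :=
  ∑ k ∈ Finset.range (n + 1), 2 * inner ℝ (a k) (a' k)

theorem hasDerivAt_energy {a : ℝ → ℕ → E} {a' : ℕ → E} {x : ℝ}
    (h : ∀ k, HasDerivAt (fun t => a t k) (a' k) x) (n : ℕ) :
    HasDerivAt (fun t => energy (a t) n) (energyDeriv (a x) a' n) x :=
  HasDerivAt.fun_sum fun k _ => (h k).norm_sq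

theorem continuous_energyDeriv {X : Type*} [TopologicalSpace X] {a a' : X → ℕ → E}
    (ha : ∀ k, Continuous fun x => a x k) (ha' : ∀ k, Continuous fun x => a' x k) (n : ℕ) :
    Continuous fun x => energyDeriv (a x) (a' x) n :=
  continuous_finsetSum _ fun k _ => continuous_const.mul ((ha k).inner (ha' k))

end Energy

section SmallJets

variable {a b : ℕ → ℂ} {J n : ℕ} {q M : ℝ}

theorem norm_cubic_le_of_low_order (hn : n ≤ J) (ha : ∀ i, 2 * i ≤ J → ‖a i‖ ≤ q)
    (hb : ∀ i, 2 * i ≤ J → ‖b i‖ ≤ q) (ha' : ∀ i ≤ n, ‖a i‖ ≤ M) (hb' : ∀ i ≤ n, ‖b i‖ ≤ M) :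
    ‖cubic a b n‖ ≤ 3 ^ n * (q ^ 2 * M) := by
  have hq : 0 ≤ q := (norm_nonneg _).trans (ha 0 (by simp))
  have hM : 0 ≤ M := (norm_nonneg _).trans (ha' 0 (by simp))
  refine norm_cubic_le fun c d e hcde => ?_
  -- at most one of the three indices exceeds `J / 2`
  have hcases : (2 * d ≤ J ∧ 2 * e ≤ J) ∨ (2 * c ≤ J ∧ 2 * e ≤ J) ∨ (2 * c ≤ J ∧ 2 * d ≤ J) := by
    omega
  rcases hcases with ⟨hd, he⟩ | ⟨hc, he⟩ | ⟨hc, hd⟩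
  · calc ‖a c‖ * ‖a d‖ * ‖b e‖ ≤ M * q * q := by
          gcongr
          exacts [ha' c (by omega), ha d hd, hb e he]
      _ = q ^ 2 * M := by ring
  · calc ‖a c‖ * ‖a d‖ * ‖b e‖ ≤ q * M * q := by
          gcongr
          exacts [ha c hc, ha' d (by omega), hb e he]
      _ = q ^ 2 * M := by ring
  · calc ‖a c‖ * ‖a d‖ * ‖b e‖ ≤ q * q * M := by
          gcongr
          exacts [ha c hc, ha d hd, hb' e (by omega)]
      _ = q ^ 2 * M := by ring

theorem norm_cubic_update_le_of_low_order (hn : n ≤ J) (ha : ∀ i, 2 * i ≤ J → ‖a i‖ ≤ q)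
    (hb : ∀ i, 2 * i ≤ J → ‖b i‖ ≤ q) (ha' : ∀ i ≤ n, ‖a i‖ ≤ M) (hb' : ∀ i < n, ‖b i‖ ≤ M) :
    ‖cubic a b n - a 0 * conj (a 0) * b n‖ ≤ 3 ^ n * (q ^ 2 * M) := by
  have hq : 0 ≤ q := (norm_nonneg _).trans (ha 0 (by simp))
  have hM : 0 ≤ M := (norm_nonneg _).trans (ha' 0 (by simp))
  rw [cubic_sub_leading]
  refine norm_cubic_le_of_low_order hn ha (fun i hi => ?_) ha' fun i hi => ?_
  all_goals
    rcases eq_or_ne i n with rfl | hne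
    · simpa
    · rw [Function.update_of_ne hne]
      first | exact hb i hi | exact hb' i (by omega)

theorem inner_sub_inner_le (u v u' v' z w : ℂ) :
    2 * inner ℝ u (Complex.I / 2 * (v + u')) - 2 * inner ℝ v (-(Complex.I / 2) * (u + v')) ≤
      ‖u‖ * ‖u' - z * conj z * u‖ + ‖v‖ * ‖v' - w * conj w * v‖ := by
  have hsplit : 2 * inner ℝ u (Complex.I / 2 * (v + u')) -
      2 * inner ℝ v (-(Complex.I / 2) * (u + v')) =
      inner ℝ u (Complex.I * (u' - z * conj z * u)) +
        inner ℝ v (Complex.I * (v' - w * conj w * v)) := by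
    simp only [Complex.inner, Complex.mul_re, Complex.mul_im, Complex.add_re, Complex.add_im,
      Complex.sub_re, Complex.sub_im, Complex.neg_re, Complex.neg_im, Complex.conj_re,
      Complex.conj_im, Complex.I_re, Complex.I_im, Complex.div_ofNat_re, Complex.div_ofNat_im]
    ring
  rw [hsplit]
  refine add_le_add ?_ ?_ <;> exact (real_inner_le_norm _ _).trans (by simp)

/-- Two jets `a`, `b` whose entries of order at most `J / 2` are bounded by a small number `q`, and
which are related by the equation `∂_ρ v = -(i/2)(u + |u|² v)`. -/
structure SmallJets (J : ℕ) (q : ℝ) (a b : ℕ → ℂ) : Prop where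
  norm_left_le : ∀ i, 2 * i ≤ J → ‖a i‖ ≤ q
  norm_right_le : ∀ i, 2 * i ≤ J → ‖b i‖ ≤ q
  small : 3 ^ J * q ^ 2 ≤ 1 / 2
  right_succ : ∀ k, b (k + 1) = -(Complex.I / 2) * (a k + cubic a b k)

namespace SmallJets

theorem three_pow_mul_le (h : SmallJets J q a b) (hn : n ≤ J) : 3 ^ n * q ^ 2 ≤ 1 / 2 :=
  le_trans (by gcongr; norm_num) h.small

-- Solving the equation for `a` makes it one derivative of `b`, up to the small cubic term.
theorem norm_left_le_of_norm_right_le (h : SmallJets J q a b) (hn : n ≤ J) {β : ℝ}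
    (hb : ∀ k ≤ n + 1, ‖b k‖ ≤ β) : ∀ k ≤ n, ‖a k‖ ≤ 5 * β := by
  obtain ⟨m, hm, hmax⟩ := (Finset.range (n + 1)).exists_max_image (fun k => ‖a k‖) ⟨0, by simp⟩
  simp only [Finset.mem_range, Nat.lt_succ_iff] at hm hmax
  have hβ : 0 ≤ β := (norm_nonneg _).trans (hb 0 (by omega))
  have hcubic : ‖cubic a b m‖ ≤ (‖a m‖ + β) / 2 := calc
    ‖cubic a b m‖ ≤ 3 ^ m * (q ^ 2 * (‖a m‖ + β)) :=
      norm_cubic_le_of_low_order (hm.trans hn) h.norm_left_le h.norm_right_le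
        (fun i hi => (hmax i (hi.trans hm)).trans (by linarith))
        fun i hi => (hb i (by omega)).trans (by linarith [norm_nonneg (a m)])
    _ = 3 ^ m * q ^ 2 * (‖a m‖ + β) := by ring
    _ ≤ 1 / 2 * (‖a m‖ + β) := by gcongr; exact h.three_pow_mul_le (hm.trans hn)
    _ = (‖a m‖ + β) / 2 := by ring
  have hsolve : a m = 2 * Complex.I * b (m + 1) - cubic a b m := by
    rw [h.right_succ]
    linear_combination (a m + cubic a b m) * Complex.I_sq
  have htri : ‖a m‖ ≤ 2 * ‖b (m + 1)‖ + ‖cubic a b m‖ := by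
    conv_lhs => rw [hsolve]
    exact (norm_sub_le _ _).trans (by simp)
  intro k hk
  linarith [hmax k hk, hb (m + 1) (by omega)]

theorem energy_left_le (h : SmallJets J q a b) (hn : n ≤ J) :
    energy a n ≤ 25 * (n + 1) * energy b (n + 1) := by
  have ha := h.norm_left_le_of_norm_right_le hn fun k hk => norm_le_sqrt_energy b hk
  refine (energy_le_of_norm_sq_le fun k hk => pow_le_pow_left₀ (norm_nonneg _) (ha k hk) 2).trans ?_
  rw [mul_pow, Real.sq_sqrt (energy_nonneg _ _)]
  exact le_of_eq (by ring)

theorem flux_le (h : SmallJets J q a b) (hn : n ≤ J) :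
    energyDeriv a (fun k => Complex.I / 2 * (b k + cubic b a k)) n -
        energyDeriv b (fun k => b (k + 1)) n ≤
      (n + 1) * (3 ^ J * q ^ 2 * (6 * (√(energy a n) * √(energy b n)) + energy b n)) := by
  set α := √(energy a n)
  set β := √(energy b n)
  have hα : 0 ≤ α := Real.sqrt_nonneg _
  have hβ : 0 ≤ β := Real.sqrt_nonneg _
  have ha : ∀ k ≤ n, ‖a k‖ ≤ α := fun k hk => norm_le_sqrt_energy a hk
  have hb : ∀ k ≤ n, ‖b k‖ ≤ β := fun k hk => norm_le_sqrt_energy b hk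
  have hterm : ∀ k ≤ n, 2 * inner ℝ (a k) (Complex.I / 2 * (b k + cubic b a k)) -
      2 * inner ℝ (b k) (b (k + 1)) ≤ 3 ^ J * q ^ 2 * (6 * (α * β) + β ^ 2) := fun k hk => by
    have hRa : ‖cubic b a k - b 0 * conj (b 0) * a k‖ ≤ 3 ^ k * (q ^ 2 * (5 * β)) :=
      norm_cubic_update_le_of_low_order (hk.trans hn) h.norm_right_le h.norm_left_le
        (fun i hi => (hb i (hi.trans hk)).trans (by linarith)) fun i hi =>
          h.norm_left_le_of_norm_right_le (n := i) (by omega) (fun l hl => hb l (by omega)) i le_rfl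
    have hRb : ‖cubic a b k - a 0 * conj (a 0) * b k‖ ≤ 3 ^ k * (q ^ 2 * (α + β)) :=
      norm_cubic_update_le_of_low_order (hk.trans hn) h.norm_left_le h.norm_right_le
        (fun i hi => (ha i (hi.trans hk)).trans (by linarith)) fun i hi =>
          (hb i (by omega)).trans (by linarith)
    rw [h.right_succ]
    calc _ ≤ _ := inner_sub_inner_le _ _ _ _ (b 0) (a 0)
      _ ≤ α * (3 ^ k * (q ^ 2 * (5 * β))) + β * (3 ^ k * (q ^ 2 * (α + β))) := by
          gcongr
          exacts [ha k hk, hb k hk]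
      _ = 3 ^ k * q ^ 2 * (6 * (α * β) + β ^ 2) := by ring
      _ ≤ _ := by gcongr; exacts [by norm_num, hk.trans hn]
  rw [energyDeriv, energyDeriv, ← Finset.sum_sub_distrib,
    ← show β ^ 2 = energy b n from Real.sq_sqrt (energy_nonneg b n)]
  refine (Finset.sum_le_card_nsmul _ _ _ fun k hk => hterm k ?_).trans (by simp)
  exact Nat.le_of_lt_succ (Finset.mem_range.1 hk)

end SmallJets

end SmallJets

section TriangleIntegral

variable {l T : ℝ} {F G : ℝ → ℝ → ℝ}

/-- The integral of `G` over the triangle `l ≤ ρ ≤ η ≤ T`. -/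
def triangleIntegral (l T : ℝ) (G : ℝ → ℝ → ℝ) : ℝ := ∫ ρ in l..T, ∫ η in ρ..T, G ρ η

theorem continuous_integral_right (hG : Continuous (Function.uncurry G)) (T : ℝ) :
    Continuous fun ρ => ∫ η in ρ..T, G ρ η := by
  simp only [intervalIntegral.integral_symm T]
  exact (intervalIntegral.continuous_parametric_intervalIntegral_of_continuous hG
    continuous_id).neg

theorem triangleIntegral_nonneg (hT : l ≤ T)
    (h : ∀ ρ η, l ≤ ρ → ρ ≤ η → η ≤ T → 0 ≤ G ρ η) : 0 ≤ triangleIntegral l T G :=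
  intervalIntegral.integral_nonneg hT fun ρ hρ =>
    intervalIntegral.integral_nonneg hρ.2 fun η hη => h ρ η hρ.1 hη.1 hη.2

theorem triangleIntegral_mono (hT : l ≤ T) (hF : Continuous (Function.uncurry F))
    (hG : Continuous (Function.uncurry G))
    (h : ∀ ρ η, l ≤ ρ → ρ ≤ η → η ≤ T → F ρ η ≤ G ρ η) :
    triangleIntegral l T F ≤ triangleIntegral l T G := by
  refine intervalIntegral.integral_mono_on hT
    ((continuous_integral_right hF T).intervalIntegrable _ _)
    ((continuous_integral_right hG T).intervalIntegrable _ _) fun ρ hρ => ?_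
  exact intervalIntegral.integral_mono_on hρ.2
    (Continuous.intervalIntegrable (by fun_prop) _ _)
    (Continuous.intervalIntegrable (by fun_prop) _ _) fun η hη => h ρ η hρ.1 hη.1 hη.2

theorem triangleIntegral_sub (hF : Continuous (Function.uncurry F))
    (hG : Continuous (Function.uncurry G)) :
    triangleIntegral l T (fun ρ η => F ρ η - G ρ η) =
      triangleIntegral l T F - triangleIntegral l T G := by
  unfold triangleIntegral
  rw [← intervalIntegral.integral_sub ((continuous_integral_right hF T).intervalIntegrable _ _)
    ((continuous_integral_right hG T).intervalIntegrable _ _)]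
  refine intervalIntegral.integral_congr fun ρ _ => intervalIntegral.integral_sub ?_ ?_
  all_goals exact Continuous.intervalIntegrable (by fun_prop) _ _

theorem triangleIntegral_const_mul (c : ℝ) :
    triangleIntegral l T (fun ρ η => c * G ρ η) = c * triangleIntegral l T G := by
  simp only [triangleIntegral, intervalIntegral.integral_const_mul]

theorem triangleIntegral_swap (hT : l ≤ T) (hG : Continuous (Function.uncurry G)) :
    triangleIntegral l T G = ∫ η in l..T, ∫ ρ in l..η, G ρ η := by
  let H : ℝ → ℝ → ℝ := fun ρ η => {p : ℝ × ℝ | p.1 < p.2}.indicator (Function.uncurry G) (ρ, η)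
  have hright : ∀ ρ ∈ Ioc l T, ∫ η in ρ..T, G ρ η = ∫ η in Ioc l T, H ρ η := fun ρ hρ => by
    have : H ρ = (Ioi ρ).indicator (G ρ) := rfl
    rw [intervalIntegral.integral_of_le hρ.2, this, setIntegral_indicator measurableSet_Ioi,
      Ioc_inter_Ioi, sup_eq_right.2 hρ.1.le]
  have hleft : ∀ η ∈ Ioc l T, ∫ ρ in l..η, G ρ η = ∫ ρ in Ioc l T, H ρ η := fun η hη => by
    have : (fun ρ => H ρ η) = (Iio η).indicator fun ρ => G ρ η := rfl
    rw [intervalIntegral.integral_of_le hη.1.le, this, setIntegral_indicator measurableSet_Iio,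
      integral_Ioc_eq_integral_Ioo]
    congr 2
    ext ρ
    simp only [mem_Ioo, mem_inter_iff, mem_Ioc, mem_Iio]
    exact ⟨fun h => ⟨⟨h.1, h.2.le.trans hη.2⟩, h.2⟩, fun h => ⟨h.1.1, h.2⟩⟩
  have hint : Integrable (Function.uncurry H)
      ((volume.restrict (Ioc l T)).prod (volume.restrict (Ioc l T))) := by
    refine Integrable.indicator ?_ (measurableSet_lt measurable_fst measurable_snd)
    rw [Measure.prod_restrict, ← Measure.volume_eq_prod]
    exact (hG.continuousOn.integrableOn_compact (isCompact_Icc.prod isCompact_Icc)).mono_set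
      (prod_mono Ioc_subset_Icc_self Ioc_subset_Icc_self)
  rw [triangleIntegral, intervalIntegral.integral_of_le hT, intervalIntegral.integral_of_le hT,
    setIntegral_congr_fun measurableSet_Ioc hright, setIntegral_congr_fun measurableSet_Ioc hleft]
  exact integral_integral_swap hint

theorem integral_add_integral_eq_diagonal_add_triangleIntegral {A B A' B' : ℝ → ℝ → ℝ}
    (hT : l ≤ T) (cA : Continuous (Function.uncurry A)) (cB : Continuous (Function.uncurry B))
    (cA' : Continuous (Function.uncurry A')) (cB' : Continuous (Function.uncurry B'))
    (hA : ∀ ρ η, l ≤ ρ → ρ < η → HasDerivAt (fun η => A ρ η) (A' ρ η) η)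
    (hB : ∀ ρ η, l ≤ ρ → ρ < η → HasDerivAt (fun ρ => B ρ η) (B' ρ η) ρ) :
    (∫ ρ in l..T, A ρ T) + ∫ η in l..T, B l η =
      (∫ s in l..T, (A s s + B s s)) + triangleIntegral l T fun ρ η => A' ρ η - B' ρ η := by
  have hA' : triangleIntegral l T A' = ∫ ρ in l..T, (A ρ T - A ρ ρ) := by
    refine intervalIntegral.integral_congr fun ρ hρ => ?_
    rw [uIcc_of_le hT] at hρ
    exact intervalIntegral.integral_eq_sub_of_hasDerivAt_of_le hρ.2
      (Continuous.continuousOn (by fun_prop)) (fun η hη => hA ρ η hρ.1 hη.1)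
      (Continuous.intervalIntegrable (by fun_prop) _ _)
  have hB' : triangleIntegral l T B' = ∫ η in l..T, (B η η - B l η) := by
    rw [triangleIntegral_swap hT cB']
    refine intervalIntegral.integral_congr fun η hη => ?_
    rw [uIcc_of_le hT] at hη
    exact intervalIntegral.integral_eq_sub_of_hasDerivAt_of_le (f := fun ρ => B ρ η) hη.1
      (Continuous.continuousOn (by fun_prop)) (fun ρ hρ => hB ρ η hρ.1.le hρ.2)
      (Continuous.intervalIntegrable (by fun_prop) _ _)
  rw [triangleIntegral_sub cA' cB', hA', hB', intervalIntegral.integral_sub,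
    intervalIntegral.integral_sub, intervalIntegral.integral_add]
  · ring
  all_goals exact Continuous.intervalIntegrable (by fun_prop) _ _

end TriangleIntegral

section GhostWeight

/-- Alinhac's ghost weight: it stays between `exp (-π / 2)` and `1` for `η ≥ 0`, while its decay
rate absorbs error terms with a factor `1 / (1 + η ^ 2)`. -/
def ghostWeight (η : ℝ) : ℝ := Real.exp (-Real.arctan η)

theorem ghostWeight_pos (η : ℝ) : 0 < ghostWeight η := Real.exp_pos _

theorem ghostWeight_le_one {η : ℝ} (h : 0 ≤ η) : ghostWeight η ≤ 1 :=
  Real.exp_le_one_iff.2 (neg_nonpos.2 (Real.arctan_nonneg.2 h))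

theorem exp_neg_pi_div_two_le_ghostWeight (η : ℝ) : Real.exp (-(Real.pi / 2)) ≤ ghostWeight η :=
  Real.exp_le_exp.2 (neg_le_neg (Real.arctan_lt_pi_div_two η).le)

theorem continuous_ghostWeight : Continuous ghostWeight := by
  unfold ghostWeight
  fun_prop

theorem hasDerivAt_ghostWeight (η : ℝ) :
    HasDerivAt ghostWeight (-(ghostWeight η / (1 + η ^ 2))) η :=
  (Real.hasDerivAt_arctan η).fun_neg.exp.congr_deriv (by rw [ghostWeight]; ring)

end GhostWeight

section WeightedEnergy

variable {a b a' b' : ℝ → ℝ → ℝ} {T : ℝ} (m p : ℕ)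

-- The two error terms are absorbed by the derivatives of the ghost weight and of `ρ ^ (p + 1)`.
theorem weighted_flux_le {ρ η x y x' y' : ℝ} (hρ : 0 < ρ) (hη : 0 ≤ η) (hx : 0 ≤ x) (hy : 0 ≤ y)
    (h : x' - y' ≤ x / (1 + η ^ 2) + y / (2 * ρ)) :
    ρ ^ (p + 1) * ((m * η ^ (m - 1) * ghostWeight η +
          η ^ m * -(ghostWeight η / (1 + η ^ 2))) * x + η ^ m * ghostWeight η * x') -
        (((p + 1 : ℕ) : ℝ) * ρ ^ p * y + ρ ^ (p + 1) * y') * (η ^ m * ghostWeight η) ≤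
      m * (ρ ^ (p + 1) * η ^ (m - 1) * x) -
        Real.exp (-(Real.pi / 2)) / 2 * (ρ ^ p * η ^ m * y) := by
  have hw := ghostWeight_pos η
  have hflux : ρ ^ (p + 1) * η ^ m * ghostWeight η * (x' - y') ≤
      ρ ^ (p + 1) * η ^ m * ghostWeight η * (x / (1 + η ^ 2) + y / (2 * ρ)) := by gcongr
  have habsorb : ρ ^ (p + 1) * η ^ m * ghostWeight η * (y / (2 * ρ)) =
      1 / 2 * (ρ ^ p * η ^ m * y) * ghostWeight η := by
    field_simp
    ring
  have hle : m * (ρ ^ (p + 1) * η ^ (m - 1) * x) * ghostWeight η ≤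
      m * (ρ ^ (p + 1) * η ^ (m - 1) * x) * 1 := by
    gcongr
    exact ghostWeight_le_one hη
  have hge : ρ ^ p * η ^ m * y * Real.exp (-(Real.pi / 2)) ≤
      ρ ^ p * η ^ m * y * ghostWeight η := by
    gcongr
    exact exp_neg_pi_div_two_le_ghostWeight η
  have hdrop : 0 ≤ p * (ρ ^ p * η ^ m * y) * ghostWeight η := by positivity
  rw [mul_add, habsorb] at hflux
  push_cast
  have hexpand : ρ ^ (p + 1) * ((m * η ^ (m - 1) * ghostWeight η +
          η ^ m * -(ghostWeight η / (1 + η ^ 2))) * x + η ^ m * ghostWeight η * x') -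
        ((p + 1) * ρ ^ p * y + ρ ^ (p + 1) * y') * (η ^ m * ghostWeight η) =
      ρ ^ (p + 1) * η ^ m * ghostWeight η * (x' - y') +
        m * (ρ ^ (p + 1) * η ^ (m - 1) * x) * ghostWeight η -
        ρ ^ (p + 1) * η ^ m * ghostWeight η * (x / (1 + η ^ 2)) -
        p * (ρ ^ p * η ^ m * y) * ghostWeight η - ρ ^ p * η ^ m * y * ghostWeight η := by ring
  linarith

theorem exp_mul_integral_le_integral_ghostWeight {f : ℝ → ℝ} (hT : 1 ≤ T) (cf : Continuous f)
    (hf : ∀ ρ, 0 ≤ f ρ) :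
    Real.exp (-(Real.pi / 2)) * (∫ ρ in (1 : ℝ)..T, ρ ^ (p + 1) * T ^ m * f ρ) ≤
      ∫ ρ in (1 : ℝ)..T, ρ ^ (p + 1) * (T ^ m * ghostWeight T * f ρ) := by
  rw [← intervalIntegral.integral_const_mul]
  refine intervalIntegral.integral_mono_on hT (Continuous.intervalIntegrable (by fun_prop) _ _)
    (Continuous.intervalIntegrable (by fun_prop) _ _) fun ρ hρ => ?_
  have : 0 ≤ ρ ^ (p + 1) * T ^ m * f ρ := by
    have := hf ρ
    have := hρ.1
    positivity
  nlinarith [exp_neg_pi_div_two_le_ghostWeight T]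

theorem integral_ghostWeight_diagonal_le {f g : ℝ → ℝ} (hT : 1 ≤ T) (cf : Continuous f)
    (cg : Continuous g) (hf : ∀ s, 0 ≤ f s) (hg : ∀ s, 0 ≤ g s) :
    (∫ s in (1 : ℝ)..T, (s ^ (p + 1) * (s ^ m * ghostWeight s * f s) +
        s ^ (p + 1) * g s * (s ^ m * ghostWeight s))) ≤
      ∫ s in (1 : ℝ)..T, s ^ (p + 1 + m) * (f s + g s) := by
  have cw := continuous_ghostWeight
  refine intervalIntegral.integral_mono_on hT (Continuous.intervalIntegrable (by fun_prop) _ _)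
    (Continuous.intervalIntegrable (by fun_prop) _ _) fun s hs => ?_
  have hs0 : 0 ≤ s := by linarith [hs.1]
  have : 0 ≤ s ^ (p + 1 + m) * (f s + g s) := by
    have := hf s
    have := hg s
    positivity
  exact le_trans (le_of_eq (by ring)) (mul_le_of_le_one_right this (ghostWeight_le_one hs0))

theorem weighted_energy_le (hT : 1 ≤ T)
    (ca : Continuous (Function.uncurry a)) (cb : Continuous (Function.uncurry b))
    (ca' : Continuous (Function.uncurry a')) (cb' : Continuous (Function.uncurry b'))
    (ha : ∀ ρ η, 0 ≤ a ρ η) (hb : ∀ ρ η, 0 ≤ b ρ η)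
    (da : ∀ ρ η, ρ < η → HasDerivAt (fun η => a ρ η) (a' ρ η) η)
    (db : ∀ ρ η, ρ < η → HasDerivAt (fun ρ => b ρ η) (b' ρ η) ρ)
    (hflux : ∀ ρ η, 1 ≤ ρ → ρ ≤ η → η ≤ T →
      a' ρ η - b' ρ η ≤ a ρ η / (1 + η ^ 2) + b ρ η / (2 * ρ)) :
    Real.exp (-(Real.pi / 2)) * (∫ ρ in (1 : ℝ)..T, ρ ^ (p + 1) * T ^ m * a ρ T) +
        Real.exp (-(Real.pi / 2)) / 2 * triangleIntegral 1 T (fun ρ η => ρ ^ p * η ^ m * b ρ η) ≤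
      (∫ s in (1 : ℝ)..T, s ^ (p + 1 + m) * (a s s + b s s)) +
        m * triangleIntegral 1 T (fun ρ η => ρ ^ (p + 1) * η ^ (m - 1) * a ρ η) := by
  have cw := continuous_ghostWeight
  have hη : ∀ p : ℝ × ℝ, 1 + p.2 ^ 2 ≠ 0 := fun p => by positivity
  have cA' : Continuous (Function.uncurry fun ρ η => ρ ^ (p + 1) *
      ((m * η ^ (m - 1) * ghostWeight η + η ^ m * -(ghostWeight η / (1 + η ^ 2))) * a ρ η +
        η ^ m * ghostWeight η * a' ρ η)) := by
    unfold Function.uncurry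
    fun_prop (disch := exact hη _)
  have hid := integral_add_integral_eq_diagonal_add_triangleIntegral hT
    (A := fun ρ η => ρ ^ (p + 1) * (η ^ m * ghostWeight η * a ρ η))
    (B := fun ρ η => ρ ^ (p + 1) * b ρ η * (η ^ m * ghostWeight η))
    (B' := fun ρ η => (((p + 1 : ℕ) : ℝ) * ρ ^ p * b ρ η + ρ ^ (p + 1) * b' ρ η) *
      (η ^ m * ghostWeight η))
    (by fun_prop) (by fun_prop) cA' (by fun_prop)
    (fun ρ η _ h => (((hasDerivAt_pow m η).mul (hasDerivAt_ghostWeight η)).mul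
      (da ρ η h)).const_mul _)
    (fun ρ η _ h => ((hasDerivAt_pow (p + 1) ρ).mul (db ρ η h)).mul_const _)
  have hbulk := triangleIntegral_mono hT (cA'.sub (by fun_prop)) (by fun_prop)
    fun ρ η h1 h2 h3 => weighted_flux_le m p (by linarith) (by linarith) (ha ρ η) (hb ρ η)
      (hflux ρ η h1 h2 h3)
  rw [triangleIntegral_sub (F := fun ρ η => m * (ρ ^ (p + 1) * η ^ (m - 1) * a ρ η))
      (G := fun ρ η => Real.exp (-(Real.pi / 2)) / 2 * (ρ ^ p * η ^ m * b ρ η))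
      (by fun_prop) (by fun_prop), triangleIntegral_const_mul, triangleIntegral_const_mul] at hbulk
  have hleft : 0 ≤ ∫ η in (1 : ℝ)..T, (1 : ℝ) ^ (p + 1) * b 1 η * (η ^ m * ghostWeight η) :=
    intervalIntegral.integral_nonneg hT fun η hη => by
      have := hb 1 η
      have := ghostWeight_pos η
      have := hη.1
      positivity
  linarith [exp_mul_integral_le_integral_ghostWeight (f := fun ρ => a ρ T) m p hT (by fun_prop)
      fun ρ => ha ρ T,
    integral_ghostWeight_diagonal_le (f := fun s => a s s) (g := fun s => b s s) m p hT
      (by fun_prop) (by fun_prop) (fun s => ha s s) fun s => hb s s]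

end WeightedEnergy

section OneDimensional

theorem norm_sq_le_norm_sq_add_integral {E : Type*} [NormedAddCommGroup E]
    [InnerProductSpace ℝ E] {f f' : ℝ → E} {r T : ℝ} (hrT : r ≤ T) (cf : Continuous f)
    (cf' : Continuous f') (hf : ∀ s ∈ Ioo r T, HasDerivAt f (f' s) s) :
    ‖f r‖ ^ 2 ≤ ‖f T‖ ^ 2 + ∫ s in r..T, (‖f s‖ ^ 2 + ‖f' s‖ ^ 2) := by
  have hftc := intervalIntegral.integral_eq_sub_of_hasDerivAt_of_le hrT
    (cf.norm.pow 2).continuousOn (fun s hs => (hf s hs).norm_sq)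
    (Continuous.intervalIntegrable (by fun_prop) _ _)
  have hle : -(∫ s in r..T, (‖f s‖ ^ 2 + ‖f' s‖ ^ 2)) ≤ ∫ s in r..T, 2 * inner ℝ (f s) (f' s) := by
    rw [← intervalIntegral.integral_neg]
    refine intervalIntegral.integral_mono_on hrT (Continuous.intervalIntegrable (by fun_prop) _ _)
      (Continuous.intervalIntegrable (by fun_prop) _ _) fun s _ => ?_
    have := norm_add_sq_real (f s) (f' s)
    have := sq_nonneg ‖f s + f' s‖
    linarith
  simp only [Pi.pow_apply] at hftc
  linarith

theorem integral_one_div_sq {a b : ℝ} (ha : 0 < a) (hb : 0 < b) :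
    ∫ s in a..b, 1 / s ^ 2 = 1 / a - 1 / b := by
  have h0 : (0 : ℝ) ∉ uIcc a b := notMem_uIcc_of_lt ha hb
  have := integral_zpow (a := a) (b := b) (n := -2) (Or.inr ⟨by norm_num, h0⟩)
  norm_num [zpow_neg] at this
  simp only [one_div]
  linarith

theorem intervalIntegrable_one_div_sq {a b : ℝ} (ha : 0 < a) (hb : 0 < b) :
    IntervalIntegrable (fun s : ℝ => 1 / s ^ 2) volume a b := by
  refine ContinuousOn.intervalIntegrable
    (continuousOn_const.div (continuousOn_pow 2) fun s hs => ?_)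
  have : s ≠ 0 := fun h => notMem_uIcc_of_lt ha hb (h ▸ hs)
  positivity

theorem norm_le_norm_add_div {E : Type*} [NormedAddCommGroup E] [NormedSpace ℝ E]
    [CompleteSpace E] {f f' : ℝ → E} {r T M : ℝ} (hr : 0 < r) (hrT : r ≤ T) (hM : 0 ≤ M)
    (cf : Continuous f) (cf' : Continuous f') (hf : ∀ s ∈ Ioo r T, HasDerivAt f (f' s) s)
    (hbound : ∀ s ∈ Icc r T, ‖f' s‖ ≤ M * (1 / s ^ 2)) : ‖f r‖ ≤ ‖f T‖ + M / r := by
  have hT : 0 < T := hr.trans_le hrT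
  have hftc := intervalIntegral.integral_eq_sub_of_hasDerivAt_of_le hrT cf.continuousOn hf
    (cf'.intervalIntegrable _ _)
  calc ‖f r‖ = ‖f T - ∫ s in r..T, f' s‖ := by rw [hftc, sub_sub_cancel]
    _ ≤ ‖f T‖ + ∫ s in r..T, ‖f' s‖ := (norm_sub_le _ _).trans
        (by gcongr; exact intervalIntegral.norm_integral_le_integral_norm hrT)
    _ ≤ ‖f T‖ + ∫ s in r..T, M * (1 / s ^ 2) := by
        gcongr
        exact intervalIntegral.integral_mono_on hrT (cf'.norm.intervalIntegrable _ _)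
          ((intervalIntegrable_one_div_sq hr hT).const_mul M) hbound
    _ ≤ ‖f T‖ + M / r := by
        rw [intervalIntegral.integral_const_mul, integral_one_div_sq hr hT, mul_sub, mul_one_div,
          mul_one_div]
        have : 0 ≤ M / T := by positivity
        linarith

end OneDimensional

section Hierarchy

/-- Jets in the variable `ρ` of a solution of the Thirring system in the null coordinates
`ρ = x - t + 2`, `η = x + t`, on the half-plane `ρ ≤ η` whose boundary is the initial line `t = 1`:
`U ρ η k` stands for `∂_ρ ^ k u`, and the system reads `∂_η u = (i/2)(v + |v|² u)`,
`∂_ρ v = -(i/2)(u + |u|² v)`. -/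
structure NullSolution (U V : ℝ → ℝ → ℕ → ℂ) : Prop where
  continuous_left : ∀ k, Continuous fun p : ℝ × ℝ => U p.1 p.2 k
  continuous_right : ∀ k, Continuous fun p : ℝ × ℝ => V p.1 p.2 k
  hasDerivAt_rho_left : ∀ k ρ η, ρ < η → HasDerivAt (fun r => U r η k) (U ρ η (k + 1)) ρ
  hasDerivAt_rho_right : ∀ k ρ η, ρ < η → HasDerivAt (fun r => V r η k) (V ρ η (k + 1)) ρ
  hasDerivAt_eta_left : ∀ k ρ η, ρ < η → HasDerivAt (fun e => U ρ e k)
    (Complex.I / 2 * (V ρ η k + cubic (V ρ η) (U ρ η) k)) η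
  hasDerivAt_diagonal_left : ∀ k s, HasDerivAt (fun r => U r r k)
    (U s s (k + 1) + Complex.I / 2 * (V s s k + cubic (V s s) (U s s) k)) s
  right_succ : ∀ k ρ η, ρ ≤ η →
    V ρ η (k + 1) = -(Complex.I / 2) * (U ρ η k + cubic (U ρ η) (V ρ η) k)

/-- Decay of rate `(N + 6) / 2` and size `D` of the jets of order at most `N + 3` along the initial
line. -/
def DataDecay (N : ℕ) (D : ℝ) (U V : ℝ → ℝ → ℕ → ℂ) : Prop :=
  ∀ s, 1 ≤ s → ∀ i ≤ N + 3,
    ‖U s s i‖ ^ 2 * s ^ (N + 6) ≤ D ^ 2 ∧ ‖V s s i‖ ^ 2 * s ^ (N + 6) ≤ D ^ 2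

/-- The smallness threshold of the bootstrap argument. It is chosen so that the cubic terms are
absorbed by the ghost weight and by the derivative of `ρ ^ (p + 1)`. -/
def threshold (N : ℕ) : ℝ := 1 / (8 * (N + 4) * 3 ^ (N + 3))

/-- The bootstrap assumption up to `η ≤ T`: the lower order jets decay at the critical rate
`(ρ η) ^ (-1 / 2)`, with a small constant. -/
def CriticalBound (N : ℕ) (T : ℝ) (U V : ℝ → ℝ → ℕ → ℂ) : Prop :=
  ∀ ρ η, 1 ≤ ρ → ρ ≤ η → η ≤ T → ∀ i ≤ N + 1,
    ‖U ρ η i‖ ^ 2 * (ρ * η) ≤ threshold N ∧ ‖V ρ η i‖ ^ 2 * (ρ * η) ≤ threshold N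

theorem threshold_pos (N : ℕ) : 0 < threshold N := by
  unfold threshold
  positivity

theorem three_pow_mul_threshold (N : ℕ) :
    3 ^ (N + 3) * threshold N = 1 / (8 * (N + 4)) := by
  rw [threshold]
  field_simp

theorem three_pow_mul_threshold_le (N : ℕ) : 3 ^ (N + 3) * threshold N ≤ 1 / 2 := by
  rw [three_pow_mul_threshold]
  have : (0 : ℝ) ≤ N := N.cast_nonneg
  gcongr
  linarith

theorem threshold_le_one (N : ℕ) : threshold N ≤ 1 := by
  have h3 : (1 : ℝ) ≤ 3 ^ (N + 3) := one_le_pow₀ (by norm_num)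
  nlinarith [three_pow_mul_threshold_le N, threshold_pos N]

variable {U V : ℝ → ℝ → ℕ → ℂ} {N m p n i : ℕ} {T D ρ η : ℝ}

theorem CriticalBound.smallJets (hU : NullSolution U V) (h : CriticalBound N T U V)
    (hρ : 1 ≤ ρ) (hη : ρ ≤ η) (hT : η ≤ T) :
    SmallJets (N + 3) √(threshold N / (ρ * η)) (U ρ η) (V ρ η) := by
  have hη1 : 1 ≤ η := hρ.trans hη
  have hρη : 1 ≤ ρ * η := one_le_mul_of_one_le_of_one_le hρ hη1
  refine ⟨fun i hi => ?_, fun i hi => ?_, ?_, fun k => hU.right_succ k ρ η hη⟩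
  · refine Real.le_sqrt_of_sq_le ((le_div_iff₀ (by positivity)).2 ?_)
    exact (h ρ η hρ hη hT i (by omega)).1
  · refine Real.le_sqrt_of_sq_le ((le_div_iff₀ (by positivity)).2 ?_)
    exact (h ρ η hρ hη hT i (by omega)).2
  · have := (threshold_pos N).le
    rw [Real.sq_sqrt (by positivity)]
    refine le_trans ?_ (three_pow_mul_threshold_le N)
    gcongr
    exact div_le_self this hρη

theorem cubic_error_le {α β : ℝ} (hρ : 1 ≤ ρ) (hη : 1 ≤ η) :
    (6 * (α * β) + β ^ 2) / (8 * (ρ * η)) ≤ α ^ 2 / (1 + η ^ 2) + β ^ 2 / (2 * ρ) := by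
  have hyoung : α * β / (ρ * η) ≤ (α ^ 2 / η ^ 2 + β ^ 2 / ρ ^ 2) / 2 := by
    have h := two_mul_le_add_sq (α / η) (β / ρ)
    have : α * β / (ρ * η) = α / η * (β / ρ) := by field_simp
    rw [div_pow, div_pow] at h
    linarith
  have hα : α ^ 2 / η ^ 2 ≤ 2 * (α ^ 2 / (1 + η ^ 2)) := by
    rw [← mul_div_assoc, div_le_div_iff₀ (by positivity) (by positivity)]
    nlinarith [mul_nonneg (sq_nonneg α) (show 0 ≤ η ^ 2 - 1 by nlinarith)]
  have hβ : β ^ 2 / ρ ^ 2 ≤ β ^ 2 / ρ := by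
    gcongr
    exact le_self_pow₀ hρ two_ne_zero
  have hβ' : β ^ 2 / (ρ * η) ≤ β ^ 2 / ρ := by
    gcongr
    exact le_mul_of_one_le_right (by linarith) hη
  calc (6 * (α * β) + β ^ 2) / (8 * (ρ * η))
      = 3 / 4 * (α * β / (ρ * η)) + 1 / 8 * (β ^ 2 / (ρ * η)) := by field_simp; ring
    _ ≤ α ^ 2 / (1 + η ^ 2) + 1 / 2 * (β ^ 2 / ρ) := by
        have : 0 ≤ α ^ 2 / (1 + η ^ 2) := by positivity
        linarith
    _ = _ := by field_simp

theorem CriticalBound.flux_le (hU : NullSolution U V) (h : CriticalBound N T U V)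
    (hn : n ≤ N + 3) (hρ : 1 ≤ ρ) (hη : ρ ≤ η) (hT : η ≤ T) :
    energyDeriv (U ρ η) (fun k => Complex.I / 2 * (V ρ η k + cubic (V ρ η) (U ρ η) k)) n -
        energyDeriv (V ρ η) (fun k => V ρ η (k + 1)) n ≤
      energy (U ρ η) n / (1 + η ^ 2) + energy (V ρ η) n / (2 * ρ) := by
  have hη1 : 1 ≤ η := hρ.trans hη
  have hκ := (threshold_pos N).le
  set α := √(energy (U ρ η) n)
  set β := √(energy (V ρ η) n)
  have hα : α ^ 2 = energy (U ρ η) n := Real.sq_sqrt (energy_nonneg _ _)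
  have hβ : β ^ 2 = energy (V ρ η) n := Real.sq_sqrt (energy_nonneg _ _)
  have hn' : (n : ℝ) + 1 ≤ N + 4 := by
    have : (n : ℝ) ≤ N + 3 := mod_cast hn
    linarith
  have herr := cubic_error_le (α := α) (β := β) hρ hη1
  rw [hα, hβ] at herr
  refine ((h.smallJets hU hρ hη hT).flux_le hn).trans (le_trans ?_ herr)
  rw [Real.sq_sqrt (by positivity)]
  calc (n + 1) * (3 ^ (N + 3) * (threshold N / (ρ * η)) * (6 * (α * β) + energy (V ρ η) n))
      ≤ (N + 4) * (3 ^ (N + 3) * (threshold N / (ρ * η)) * (6 * (α * β) + energy (V ρ η) n)) := by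
        have := energy_nonneg (V ρ η) n
        gcongr
    _ = (N + 4) * (3 ^ (N + 3) * threshold N) * (6 * (α * β) + energy (V ρ η) n) / (ρ * η) := by
        ring
    _ = (6 * (α * β) + energy (V ρ η) n) / (8 * (ρ * η)) := by
        rw [three_pow_mul_threshold]
        field_simp

theorem DataDecay.integral_diagonal_le (hU : NullSolution U V) (h : DataDecay N D U V)
    (hn : n ≤ N + 3) (hT : 1 ≤ T) :
    ∫ s in (1 : ℝ)..T, s ^ (N + 4) * (energy (U s s) n + energy (V s s) n) ≤
      2 * (N + 4) * D ^ 2 := by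
  have cU : Continuous fun s => energy (U s s) n :=
    continuous_energy (fun k => (hU.continuous_left k).comp (continuous_id.prodMk continuous_id)) n
  have cV : Continuous fun s => energy (V s s) n :=
    continuous_energy (fun k => (hU.continuous_right k).comp (continuous_id.prodMk continuous_id)) n
  have hpoint : ∀ s ∈ Icc 1 T, s ^ (N + 4) * (energy (U s s) n + energy (V s s) n) ≤
      2 * (N + 4) * D ^ 2 * (1 / s ^ 2) := fun s hs => by
    have hs0 : 0 < s := by linarith [hs.1]
    have hE := energy_le_of_norm_sq_le (a := U s s) (n := n) fun k hk =>
      (le_div_iff₀ (by positivity)).2 (h s hs.1 k (hk.trans hn)).1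
    have hF := energy_le_of_norm_sq_le (a := V s s) (n := n) fun k hk =>
      (le_div_iff₀ (by positivity)).2 (h s hs.1 k (hk.trans hn)).2
    have hn' : (n : ℝ) + 1 ≤ N + 4 := by
      have : (n : ℝ) ≤ N + 3 := mod_cast hn
      linarith
    calc _ ≤ s ^ (N + 4) * ((n + 1) * (D ^ 2 / s ^ (N + 6)) + (n + 1) * (D ^ 2 / s ^ (N + 6))) := by
          gcongr
      _ = 2 * (n + 1) * D ^ 2 * (1 / s ^ 2) := by field_simp; ring
      _ ≤ _ := by gcongr
  have hint := intervalIntegrable_one_div_sq one_pos (one_pos.trans_le hT)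
  refine (intervalIntegral.integral_mono_on hT (Continuous.intervalIntegrable (by fun_prop) _ _)
    (hint.const_mul _) hpoint).trans ?_
  rw [intervalIntegral.integral_const_mul, integral_one_div_sq one_pos (one_pos.trans_le hT)]
  refine mul_le_of_le_one_right (by positivity) ?_
  have : 0 ≤ 1 / T := by positivity
  linarith

/-- The constant in the weighted energy bound after `m` steps of the hierarchy. -/
def hierarchyConst (N : ℕ) : ℕ → ℝ
  | 0 => 2 * Real.exp (Real.pi / 2) * (2 * (N + 4))
  | m + 1 => 2 * Real.exp (Real.pi / 2) * (2 * (N + 4) + (m + 1) * (25 * (N + 4)) *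
      hierarchyConst N m)

theorem hierarchyConst_nonneg (N m : ℕ) : 0 ≤ hierarchyConst N m := by
  induction m with
  | zero =>
    unfold hierarchyConst
    positivity
  | succ m ih =>
    unfold hierarchyConst
    positivity

theorem CriticalBound.weighted_energy_le (hU : NullSolution U V) (h : CriticalBound N T U V)
    (hn : p ≤ N + 3) (hT : 1 ≤ T) :
    Real.exp (-(Real.pi / 2)) *
          (∫ ρ in (1 : ℝ)..T, ρ ^ (p + 1) * T ^ m * energy (U ρ T) p) +
        Real.exp (-(Real.pi / 2)) / 2 *
          triangleIntegral 1 T (fun ρ η => ρ ^ p * η ^ m * energy (V ρ η) p) ≤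
      (∫ s in (1 : ℝ)..T, s ^ (p + 1 + m) * (energy (U s s) p + energy (V s s) p)) +
        m * triangleIntegral 1 T (fun ρ η => ρ ^ (p + 1) * η ^ (m - 1) * energy (U ρ η) p) := by
  have cU := hU.continuous_left
  have cV := hU.continuous_right
  have cU' : ∀ k, Continuous fun x : ℝ × ℝ => Complex.I / 2 *
      (V x.1 x.2 k + cubic (V x.1 x.2) (U x.1 x.2) k) := fun k =>
    continuous_const.mul ((cV k).add (continuous_cubic cV cU k))
  exact Thirring.weighted_energy_le (a := fun ρ η => energy (U ρ η) p)
    (b := fun ρ η => energy (V ρ η) p)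
    (a' := fun ρ η => energyDeriv (U ρ η)
      (fun k => Complex.I / 2 * (V ρ η k + cubic (V ρ η) (U ρ η) k)) p)
    (b' := fun ρ η => energyDeriv (V ρ η) (fun k => V ρ η (k + 1)) p) m p hT
    (continuous_energy cU p) (continuous_energy cV p)
    (continuous_energyDeriv cU cU' p) (continuous_energyDeriv cV (fun k => cV (k + 1)) p)
    (fun ρ η => energy_nonneg _ _) (fun ρ η => energy_nonneg _ _)
    (fun ρ η hlt => hasDerivAt_energy (fun k => hU.hasDerivAt_eta_left k ρ η hlt) p)
    (fun ρ η hlt => hasDerivAt_energy (fun k => hU.hasDerivAt_rho_right k ρ η hlt) p)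
    fun ρ η h1 h2 h3 => h.flux_le hU hn h1 h2 h3

theorem CriticalBound.triangleIntegral_left_le (hU : NullSolution U V) (h : CriticalBound N T U V)
    (hp : p + 1 ≤ N + 3) (hT : 1 ≤ T) :
    triangleIntegral 1 T (fun ρ η => ρ ^ (p + 1) * η ^ m * energy (U ρ η) p) ≤
      25 * (N + 4) *
        triangleIntegral 1 T (fun ρ η => ρ ^ (p + 1) * η ^ m * energy (V ρ η) (p + 1)) := by
  have cU := continuous_energy hU.continuous_left p
  have cV := continuous_energy hU.continuous_right (p + 1)
  have hp' : (p : ℝ) + 1 ≤ N + 4 := by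
    have : (p : ℝ) + 1 ≤ N + 3 := mod_cast hp
    linarith
  rw [← triangleIntegral_const_mul]
  refine triangleIntegral_mono hT (by unfold Function.uncurry; fun_prop)
    (by unfold Function.uncurry; fun_prop) fun ρ η h1 h2 h3 => ?_
  have hη : 0 ≤ η := by linarith
  have hV := energy_nonneg (V ρ η) (p + 1)
  calc ρ ^ (p + 1) * η ^ m * energy (U ρ η) p
      ≤ ρ ^ (p + 1) * η ^ m * (25 * (p + 1) * energy (V ρ η) (p + 1)) := by
        gcongr
        exact (h.smallJets hU h1 h2 h3).energy_left_le (by omega)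
    _ ≤ ρ ^ (p + 1) * η ^ m * (25 * (N + 4) * energy (V ρ η) (p + 1)) := by gcongr
    _ = 25 * (N + 4) * (ρ ^ (p + 1) * η ^ m * energy (V ρ η) (p + 1)) := by ring

theorem le_of_exp_mul_add_le {A B X : ℝ} (hA : 0 ≤ A) (hB : 0 ≤ B)
    (h : Real.exp (-(Real.pi / 2)) * A + Real.exp (-(Real.pi / 2)) / 2 * B ≤ X) :
    A ≤ 2 * Real.exp (Real.pi / 2) * X ∧ B ≤ 2 * Real.exp (Real.pi / 2) * X := by
  have he := Real.exp_pos (Real.pi / 2)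
  rw [Real.exp_neg] at h
  field_simp at h
  constructor <;> linarith

theorem CriticalBound.hierarchy (hU : NullSolution U V) (hdata : DataDecay N D U V)
    (h : CriticalBound N T U V) (hT : 1 ≤ T) (hmp : m + p = N + 3) :
    (∫ ρ in (1 : ℝ)..T, ρ ^ (p + 1) * T ^ m * energy (U ρ T) p) ≤ hierarchyConst N m * D ^ 2 ∧
      triangleIntegral 1 T (fun ρ η => ρ ^ p * η ^ m * energy (V ρ η) p) ≤
        hierarchyConst N m * D ^ 2 := by
  have hposU : ∀ m p, 0 ≤ ∫ ρ in (1 : ℝ)..T, ρ ^ (p + 1) * T ^ m * energy (U ρ T) p :=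
    fun m p => intervalIntegral.integral_nonneg hT fun ρ hρ => by
      have := energy_nonneg (U ρ T) p
      have := hρ.1
      positivity
  have hposV : ∀ m p, 0 ≤ triangleIntegral 1 T fun ρ η => ρ ^ p * η ^ m * energy (V ρ η) p :=
    fun m p => triangleIntegral_nonneg hT fun ρ η h1 h2 _ => by
      have := energy_nonneg (V ρ η) p
      have : 0 ≤ η := by linarith
      positivity
  induction m generalizing p with
  | zero =>
    obtain rfl : p = N + 3 := by omega
    have hE := h.weighted_energy_le (m := 0) hU le_rfl hT
    have hdiag := hdata.integral_diagonal_le hU (le_refl (N + 3)) hT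
    have := le_of_exp_mul_add_le (hposU 0 _) (hposV 0 _) (hE.trans (by simpa using hdiag))
    simpa only [hierarchyConst, mul_assoc] using this
  | succ m ih =>
    have hE := h.weighted_energy_le (m := m + 1) (p := p) hU (by omega) hT
    have hdiag := hdata.integral_diagonal_le hU (show p ≤ N + 3 by omega) hT
    have hleft : triangleIntegral 1 T (fun ρ η => ρ ^ (p + 1) * η ^ m * energy (U ρ η) p) ≤
        25 * (N + 4) * (hierarchyConst N m * D ^ 2) :=
      (h.triangleIntegral_left_le hU (by omega) hT).trans
        (by gcongr; exact (ih (p := p + 1) (by omega)).2)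
    rw [show p + 1 + (m + 1) = N + 4 by omega] at hE
    have := le_of_exp_mul_add_le (hposU (m + 1) p) (hposV (m + 1) p) (hE.trans (add_le_add hdiag
      (mul_le_mul_of_nonneg_left (by simpa using hleft) (Nat.cast_nonneg _))))
    convert this using 2 <;> · rw [hierarchyConst]; push_cast; ring

end Hierarchy

section Bootstrap

variable {U V : ℝ → ℝ → ℕ → ℂ} {N m p i : ℕ} {T D A ρ : ℝ}

theorem integral_mul_le_weighted_integral {f : ℝ → ℝ} {c M : ℝ} {k : ℕ} (cf : Continuous f)
    (hf : ∀ s, 0 ≤ f s) (hc : 0 ≤ c) (hρ : 1 ≤ ρ) (hT : ρ ≤ T)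
    (h : ∫ s in (1 : ℝ)..T, s ^ k * c * f s ≤ M) : (∫ s in ρ..T, f s) * (ρ ^ k * c) ≤ M := by
  have cw : Continuous fun s => s ^ k * c * f s := by fun_prop
  refine le_trans ?_ h
  calc (∫ s in ρ..T, f s) * (ρ ^ k * c)
      = ∫ s in ρ..T, ρ ^ k * c * f s := by rw [mul_comm, intervalIntegral.integral_const_mul]
    _ ≤ ∫ s in ρ..T, s ^ k * c * f s := by
        refine intervalIntegral.integral_mono_on hT
          (Continuous.intervalIntegrable (by fun_prop) _ _)
          (cw.intervalIntegrable _ _) fun s hs => ?_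
        have := hf s
        have := hs.1
        gcongr
    _ ≤ ∫ s in (1 : ℝ)..T, s ^ k * c * f s := by
        refine intervalIntegral.integral_mono_interval hρ hT le_rfl ?_ (cw.intervalIntegrable _ _)
        refine (ae_restrict_iff' measurableSet_Ioc).2 (Eventually.of_forall fun s hs => ?_)
        have := hf s
        have : 0 ≤ s := by linarith [hs.1]
        exact mul_nonneg (by positivity) (hf s)

theorem CriticalBound.norm_sq_left_mul_le (hU : NullSolution U V) (hdata : DataDecay N D U V)
    (h : CriticalBound N T U V) (hρ : 1 ≤ ρ) (hT : ρ ≤ T) (hmp : m + p = N + 3) (hi : i < p) :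
    ‖U ρ T i‖ ^ 2 * (ρ ^ (p + 1) * T ^ m) ≤ (hierarchyConst N m + 1) * D ^ 2 := by
  have hT1 : 1 ≤ T := hρ.trans hT
  have cU : ∀ k, Continuous fun r => U r T k := fun k =>
    (hU.continuous_left k).comp (by fun_prop : Continuous fun r : ℝ => (r, T))
  have cE := continuous_energy cU p
  have hsob : ‖U ρ T i‖ ^ 2 ≤ ‖U T T i‖ ^ 2 + ∫ s in ρ..T, energy (U s T) p :=
    (norm_sq_le_norm_sq_add_integral hT (cU i) (cU (i + 1)) fun s hs =>
      hU.hasDerivAt_rho_left i s T hs.2).trans <| by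
    gcongr
    exact intervalIntegral.integral_mono_on hT
      (((cU i).norm.pow 2).add ((cU (i + 1)).norm.pow 2) |>.intervalIntegrable _ _)
      (cE.intervalIntegrable _ _) fun s _ => norm_sq_add_norm_sq_succ_le_energy _ hi
  have hcorner : ‖U T T i‖ ^ 2 * (ρ ^ (p + 1) * T ^ m) ≤ D ^ 2 := calc
    _ ≤ ‖U T T i‖ ^ 2 * (T ^ (p + 1) * T ^ m) := by gcongr
    _ = ‖U T T i‖ ^ 2 * T ^ (N + 4) := by rw [← pow_add, show p + 1 + m = N + 4 by omega]
    _ ≤ ‖U T T i‖ ^ 2 * T ^ (N + 6) := by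
        gcongr
        norm_num
    _ ≤ D ^ 2 := (hdata T hT1 i (by omega)).1
  have hline := integral_mul_le_weighted_integral cE (fun s => energy_nonneg _ _)
    (by positivity : 0 ≤ T ^ m) hρ hT (h.hierarchy hU hdata hT1 hmp).1
  calc _ ≤ (‖U T T i‖ ^ 2 + ∫ s in ρ..T, energy (U s T) p) * (ρ ^ (p + 1) * T ^ m) := by gcongr
    _ ≤ _ := by linarith

theorem CriticalBound.norm_right_succ_le (hU : NullSolution U V) (h : CriticalBound N T U V)
    (hρ : 1 ≤ ρ) (hT : ρ ≤ T) (hi : i ≤ N + 1) (hA : ∀ k ≤ i, ‖U ρ T k‖ ≤ A) :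
    ‖V ρ T (i + 1)‖ ≤ 3 ^ i * A := by
  have hone : ∀ z : ℂ, ‖z‖ ^ 2 * (ρ * T) ≤ threshold N → ‖z‖ ≤ 1 := fun z hz => by
    have h1 : 1 ≤ ρ * T := one_le_mul_of_one_le_of_one_le hρ (hρ.trans hT)
    have : ‖z‖ ^ 2 * 1 ≤ ‖z‖ ^ 2 * (ρ * T) := by gcongr
    exact (sq_le_one_iff₀ (norm_nonneg z)).1 (by linarith [threshold_le_one N])
  have hlow := fun k (hk : k ≤ i) => h ρ T hρ hT le_rfl k (hk.trans hi)
  have hA0 : 0 ≤ A := (norm_nonneg _).trans (hA 0 (Nat.zero_le _))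
  have hcubic : ‖cubic (U ρ T) (V ρ T) i‖ ≤ 3 ^ i * A := norm_cubic_le fun c d e hcde => calc
    _ ≤ A * 1 * 1 := by
        gcongr
        exacts [hA c (by omega), hone _ (hlow d (by omega)).1, hone _ (hlow e (by omega)).2]
    _ = A := by ring
  have h3 : A ≤ 3 ^ i * A := le_mul_of_one_le_left hA0 (one_le_pow₀ (by norm_num))
  calc ‖V ρ T (i + 1)‖ = 1 / 2 * ‖U ρ T i + cubic (U ρ T) (V ρ T) i‖ := by
        rw [hU.right_succ i ρ T hT]
        simp
    _ ≤ 1 / 2 * (3 ^ i * A + 3 ^ i * A) := by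
        gcongr
        exact (norm_add_le _ _).trans (add_le_add ((hA i le_rfl).trans h3) hcubic)
    _ = 3 ^ i * A := by ring

theorem CriticalBound.norm_sq_right_mul_le (hU : NullSolution U V) (hdata : DataDecay N D U V)
    (hD : 0 ≤ D) (hA : 0 ≤ A) (h : CriticalBound N T U V) (hρ : 1 ≤ ρ) (hT : ρ ≤ T)
    (hm : m ≤ N + 3) (hi : i ≤ N + 1)
    (hleft : ∀ s, 1 ≤ s → s ≤ T → ∀ k ≤ i, ‖U s T k‖ ^ 2 * (s ^ 4 * T ^ m) ≤ A ^ 2) :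
    ‖V ρ T i‖ ^ 2 * (ρ ^ 2 * T ^ m) ≤ (D + 3 ^ i * A) ^ 2 := by
  have hT1 : 1 ≤ T := hρ.trans hT
  set w := √(T ^ m)
  have hw : 0 < w := Real.sqrt_pos.2 (by positivity)
  have hw2 : w ^ 2 = T ^ m := Real.sq_sqrt (by positivity)
  have cV : ∀ k, Continuous fun r => V r T k := fun k =>
    (hU.continuous_right k).comp (by fun_prop : Continuous fun r : ℝ => (r, T))
  have hderiv : ∀ s ∈ Icc ρ T, ‖V s T (i + 1)‖ ≤ 3 ^ i * A / w * (1 / s ^ 2) := fun s hs => by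
    have hs1 : 1 ≤ s := hρ.trans hs.1
    have hUs : ∀ k ≤ i, ‖U s T k‖ ≤ A / (w * s ^ 2) := fun k hk => by
      rw [le_div_iff₀ (by positivity)]
      refine le_of_sq_le_sq ?_ hA
      calc _ = ‖U s T k‖ ^ 2 * (s ^ 4 * T ^ m) := by rw [← hw2]; ring
        _ ≤ _ := hleft s hs1 hs.2 k hk
    exact (h.norm_right_succ_le hU hs1 hs.2 hi hUs).trans_eq (by field_simp)
  have hline := norm_le_norm_add_div (by positivity) hT (by positivity) (cV i) (cV (i + 1))
    (fun s hs => hU.hasDerivAt_rho_right i s T hs.2) hderiv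
  have hcorner : ‖V T T i‖ * (ρ * w) ≤ D := le_of_sq_le_sq (a := ‖V T T i‖ * (ρ * w)) (calc
    _ = ‖V T T i‖ ^ 2 * (ρ ^ 2 * T ^ m) := by rw [← hw2]; ring
    _ ≤ ‖V T T i‖ ^ 2 * (T ^ 2 * T ^ m) := by gcongr
    _ = ‖V T T i‖ ^ 2 * T ^ (2 + m) := by rw [← pow_add]
    _ ≤ ‖V T T i‖ ^ 2 * T ^ (N + 6) := by
        have : 2 + m ≤ N + 6 := by omega
        gcongr
    _ ≤ D ^ 2 := (hdata T hT1 i (by omega)).2) hD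
  calc _ = (‖V ρ T i‖ * (ρ * w)) ^ 2 := by rw [← hw2]; ring
    _ ≤ ((‖V T T i‖ + 3 ^ i * A / w / ρ) * (ρ * w)) ^ 2 := by gcongr
    _ = (‖V T T i‖ * (ρ * w) + 3 ^ i * A) ^ 2 := by field_simp
    _ ≤ _ := by gcongr

/-- The constant in the pointwise bounds with weight `ρ ^ 2 * η ^ m`. -/
def decayConst (N m : ℕ) : ℝ := (1 + 3 ^ (N + 1) * √(hierarchyConst N m + 1)) ^ 2

theorem CriticalBound.norm_sq_mul_le (hU : NullSolution U V) (hdata : DataDecay N D U V)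
    (hD : 0 ≤ D) (h : CriticalBound N T U V) (hρ : 1 ≤ ρ) (hT : ρ ≤ T) (hmp : m + p = N + 3)
    (hp : 3 ≤ p) (hip : i < p) (hi : i ≤ N + 1) :
    ‖U ρ T i‖ ^ 2 * (ρ ^ 2 * T ^ m) ≤ decayConst N m * D ^ 2 ∧
      ‖V ρ T i‖ ^ 2 * (ρ ^ 2 * T ^ m) ≤ decayConst N m * D ^ 2 := by
  set A := √(hierarchyConst N m + 1) with hA
  have hA2 : A ^ 2 = hierarchyConst N m + 1 :=
    Real.sq_sqrt (by linarith [hierarchyConst_nonneg N m])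
  have hA0 : 0 ≤ A := Real.sqrt_nonneg _
  have hT1 : 1 ≤ T := hρ.trans hT
  have hleft : ∀ s, 1 ≤ s → s ≤ T → ∀ k ≤ i, ‖U s T k‖ ^ 2 * (s ^ 4 * T ^ m) ≤ (A * D) ^ 2 :=
    fun s h1 h2 k hk => calc
      _ ≤ ‖U s T k‖ ^ 2 * (s ^ (p + 1) * T ^ m) := by
          gcongr
          omega
      _ ≤ (A * D) ^ 2 := by
          rw [mul_pow, hA2]
          exact h.norm_sq_left_mul_le hU hdata h1 h2 hmp (by omega)
  constructor
  · calc _ ≤ ‖U ρ T i‖ ^ 2 * (ρ ^ 4 * T ^ m) := by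
          gcongr
          norm_num
      _ ≤ (A * D) ^ 2 := hleft ρ hρ hT i le_rfl
      _ ≤ decayConst N m * D ^ 2 := by
          rw [mul_pow, decayConst, ← hA]
          have : A ≤ 3 ^ (N + 1) * A := le_mul_of_one_le_left hA0 (one_le_pow₀ (by norm_num))
          gcongr
          linarith
  · calc _ ≤ (D + 3 ^ i * (A * D)) ^ 2 :=
          h.norm_sq_right_mul_le hU hdata hD (by positivity) hρ hT (by omega) hi hleft
      _ = (1 + 3 ^ i * A) ^ 2 * D ^ 2 := by ring
      _ ≤ decayConst N m * D ^ 2 := by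
          rw [decayConst, ← hA]
          gcongr
          norm_num

theorem disjoint_of_forall_lt {X : Type*} [TopologicalSpace X] {K B : Set X} {τ : X → ℝ}
    (hK : IsCompact K) (hB : IsClosed B) (hτ : ContinuousOn τ K)
    (h : ∀ p ∈ K, (∀ q ∈ K, τ q < τ p → q ∉ B) → p ∉ B) : Disjoint K B := by
  rw [disjoint_iff_inter_eq_empty, ← not_nonempty_iff_eq_empty]
  intro hne
  obtain ⟨p, ⟨hpK, hpB⟩, hmin⟩ :=
    (hK.inter_right hB).exists_isMinOn hne (hτ.mono inter_subset_left)
  exact h p hpK (fun q hqK hlt hqB => hlt.not_ge (hmin ⟨hqK, hqB⟩)) hpB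

theorem isCompact_triangle (l T : ℝ) : IsCompact {p : ℝ × ℝ | l ≤ p.1 ∧ p.1 ≤ p.2 ∧ p.2 ≤ T} := by
  refine (isCompact_Icc (a := (l, l)) (b := (T, T))).of_isClosed_subset ?_ ?_
  · exact (isClosed_le continuous_const continuous_fst).inter
      ((isClosed_le continuous_fst continuous_snd).inter
        (isClosed_le continuous_snd continuous_const))
  · exact fun p ⟨h1, h2, h3⟩ => ⟨⟨h1, h1.trans h2⟩, ⟨h2.trans h3, h3⟩⟩

theorem norm_sq_mul_le_of_criticalBound_before {η : ℝ} (hN : 1 ≤ N) (hU : NullSolution U V)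
    (hdata : DataDecay N D U V) (hD : 0 ≤ D) (hρ : 1 ≤ ρ) (hη : ρ ≤ η)
    (h : ∀ s ∈ Ioo ρ η, CriticalBound N s U V) (hi : i ≤ N + 1) :
    ‖U ρ η i‖ ^ 2 * (ρ * η) ≤ (decayConst N 1 + 1) * D ^ 2 ∧
      ‖V ρ η i‖ ^ 2 * (ρ * η) ≤ (decayConst N 1 + 1) * D ^ 2 := by
  have hC : 0 ≤ decayConst N 1 * D ^ 2 := mul_nonneg (sq_nonneg _) (sq_nonneg _)
  rcases hη.eq_or_lt with rfl | hlt
  · have hw : ρ * ρ ≤ ρ ^ (N + 6) := by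
      rw [← sq]
      exact pow_le_pow_right₀ hρ (by omega)
    obtain ⟨h1, h2⟩ := hdata ρ hρ i (by omega)
    have h1' := (mul_le_mul_of_nonneg_left hw (sq_nonneg ‖U ρ ρ i‖)).trans h1
    have h2' := (mul_le_mul_of_nonneg_left hw (sq_nonneg ‖V ρ ρ i‖)).trans h2
    constructor <;> linarith
  · have hlim : ∀ f : ℝ → ℝ, Continuous f → (∀ s ∈ Ioo ρ η, f s ≤ decayConst N 1 * D ^ 2) →
        f η ≤ (decayConst N 1 + 1) * D ^ 2 := fun f hf hle => by
      have : f η ≤ decayConst N 1 * D ^ 2 :=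
        le_of_tendsto (hf.continuousWithinAt (s := Iio η))
          (eventually_of_mem (Ioo_mem_nhdsLT hlt) hle)
      linarith [sq_nonneg D]
    have hbound : ∀ s ∈ Ioo ρ η, ‖U ρ s i‖ ^ 2 * (ρ * s) ≤ decayConst N 1 * D ^ 2 ∧
        ‖V ρ s i‖ ^ 2 * (ρ * s) ≤ decayConst N 1 * D ^ 2 := fun s hs => by
      obtain ⟨h1, h2⟩ := (h s hs).norm_sq_mul_le hU hdata hD hρ hs.1.le
        (show 1 + (N + 2) = N + 3 by omega) (by omega) (by omega) hi
      have hs0 : 0 ≤ s := by linarith [hs.1]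
      have hw : ρ * s ≤ ρ ^ 2 * s ^ 1 := by
        rw [pow_one]
        gcongr
        exact le_self_pow₀ hρ two_ne_zero
      exact ⟨(by gcongr : _ ≤ _).trans h1, (by gcongr : _ ≤ _).trans h2⟩
    have cη : Continuous fun s : ℝ => (ρ, s) := by fun_prop
    exact ⟨hlim (fun s => ‖U ρ s i‖ ^ 2 * (ρ * s))
        ((((hU.continuous_left i).comp cη).norm.pow 2).mul (by fun_prop))
        fun s hs => (hbound s hs).1,
      hlim (fun s => ‖V ρ s i‖ ^ 2 * (ρ * s))
        ((((hU.continuous_right i).comp cη).norm.pow 2).mul (by fun_prop))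
        fun s hs => (hbound s hs).2⟩

theorem criticalBound_of_data_le (hN : 1 ≤ N) (hU : NullSolution U V) (hdata : DataDecay N D U V)
    (hD : 0 ≤ D) (hsmall : (decayConst N 1 + 1) * D ^ 2 < threshold N) (T : ℝ) :
    CriticalBound N T U V := by
  let B : Set (ℝ × ℝ) := ⋃ i ∈ Finset.range (N + 2),
    {p | threshold N ≤ ‖U p.1 p.2 i‖ ^ 2 * (p.1 * p.2)} ∪
      {p | threshold N ≤ ‖V p.1 p.2 i‖ ^ 2 * (p.1 * p.2)}
  have hB : IsClosed B := isClosed_biUnion_finset fun i _ =>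
    (isClosed_le continuous_const
        (((hU.continuous_left i).norm.pow 2).mul (continuous_fst.mul continuous_snd))).union
      (isClosed_le continuous_const
        (((hU.continuous_right i).norm.pow 2).mul (continuous_fst.mul continuous_snd)))
  have hnotMem : ∀ ρ η, (ρ, η) ∉ B ↔ ∀ i ≤ N + 1, ‖U ρ η i‖ ^ 2 * (ρ * η) < threshold N ∧
      ‖V ρ η i‖ ^ 2 * (ρ * η) < threshold N := fun ρ η => by
    simp [B, Nat.lt_succ_iff]
  have hdisj := disjoint_of_forall_lt (isCompact_triangle 1 T) hB continuous_snd.continuousOn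
    fun ⟨ρ, η⟩ ⟨hρ, hη, hT⟩ hbefore => (hnotMem ρ η).2 fun i hi => by
      have h := norm_sq_mul_le_of_criticalBound_before hN hU hdata hD hρ hη
        (fun s hs r e h1 h2 h3 j hj => by
          have := (hnotMem r e).1 (hbefore (r, e) ⟨h1, h2, (h3.trans hs.2.le).trans hT⟩
            (h3.trans_lt hs.2)) j hj
          exact ⟨this.1.le, this.2.le⟩) hi
      exact ⟨h.1.trans_lt hsmall, h.2.trans_lt hsmall⟩
  intro ρ η h1 h2 h3 i hi
  have := (hnotMem ρ η).1 (hdisj.notMem_of_mem_left ⟨h1, h2, h3⟩) i hi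
  exact ⟨this.1.le, this.2.le⟩

theorem NullSolution.norm_sq_mul_pow_le {η : ℝ} (hN : 1 ≤ N) (hU : NullSolution U V)
    (hdata : DataDecay N D U V) (hD : 0 ≤ D)
    (hsmall : (decayConst N 1 + 1) * D ^ 2 < threshold N) (hρ : 1 ≤ ρ) (hη : ρ ≤ η) :
    ‖U ρ η 0‖ ^ 2 * η ^ N ≤ decayConst N N * D ^ 2 ∧
      ‖V ρ η 0‖ ^ 2 * η ^ N ≤ decayConst N N * D ^ 2 := by
  obtain ⟨h1, h2⟩ := (criticalBound_of_data_le hN hU hdata hD hsmall η).norm_sq_mul_le hU hdata hD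
    hρ hη rfl le_rfl (by omega : 0 < 3) (by omega)
  have hη0 : 0 ≤ η := by linarith
  have hw : η ^ N ≤ ρ ^ 2 * η ^ N := le_mul_of_one_le_left (by positivity) (one_le_pow₀ hρ)
  exact ⟨(by gcongr : _ ≤ _).trans h1, (by gcongr : _ ≤ _).trans h2⟩

end Bootstrap

section DirDerivWithin

variable {E F : Type*} [NormedAddCommGroup E] [NormedSpace ℝ E] [NormedAddCommGroup F]
  [NormedSpace ℝ F] {s : Set E} {G H : E → F}

/-- The derivative of `G` along `w` within the set `s`. Unlike `lineDerivWithin` it makes sense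
when `w` points out of `s`, which happens here at the initial line. -/
def dirDerivWithin (s : Set E) (w : E) (G : E → F) (p : E) : F := fderivWithin ℝ G s p w

theorem contDiffOn_dirDerivWithin (hs : UniqueDiffOn ℝ s) (hG : ContDiffOn ℝ ∞ G s) (w : E) :
    ContDiffOn ℝ ∞ (dirDerivWithin s w G) s :=
  (hG.fderivWithin hs (by simp)).clm_apply contDiffOn_const

theorem contDiffOn_iterate_dirDerivWithin (hs : UniqueDiffOn ℝ s) (hG : ContDiffOn ℝ ∞ G s) (w : E)
    (k : ℕ) : ContDiffOn ℝ ∞ ((dirDerivWithin s w)^[k] G) s := by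
  induction k with
  | zero => exact hG
  | succ k ih =>
    rw [Function.iterate_succ_apply']
    exact contDiffOn_dirDerivWithin hs ih w

theorem eqOn_dirDerivWithin (h : EqOn G H s) (w : E) :
    EqOn (dirDerivWithin s w G) (dirDerivWithin s w H) s := fun p hp => by
  simp only [dirDerivWithin, fderivWithin_congr h (h hp)]

theorem hasDerivWithinAt_comp_curve (hG : DifferentiableOn ℝ G s) {γ : ℝ → E} {w : E} {I : Set ℝ}
    {r : ℝ} (hγ : HasDerivWithinAt γ w I r) (hI : MapsTo γ I s) (hr : r ∈ I) :
    HasDerivWithinAt (fun t => G (γ t)) (dirDerivWithin s w G (γ r)) I r :=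
  (hG (γ r) (hI hr)).hasFDerivWithinAt.comp_hasDerivWithinAt r hγ hI

theorem dirDerivWithin_comm (hs : UniqueDiffOn ℝ s) (hs' : s ⊆ closure (interior s))
    (hG : ContDiffOn ℝ ∞ G s) (w z : E) :
    EqOn (dirDerivWithin s w (dirDerivWithin s z G)) (dirDerivWithin s z (dirDerivWithin s w G))
      s := fun p hp => by
  have hsymm : IsSymmSndFDerivWithinAt ℝ G s p :=
    (hG p hp).isSymmSndFDerivWithinAt
      (by simpa using WithTop.coe_le_coe.2 (le_top : (2 : ℕ∞) ≤ ⊤)) hs (hs' hp) hp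
  have hd : DifferentiableWithinAt ℝ (fderivWithin ℝ G s) s p :=
    (hG.fderivWithin hs (m := ∞) (by simp)).differentiableOn (by simp) p hp
  have hsnd : ∀ a b : E, dirDerivWithin s a (dirDerivWithin s b G) p =
      fderivWithin ℝ (fderivWithin ℝ G s) s p a b := fun a b => by
    unfold dirDerivWithin
    rw [fderivWithin_clm_apply (hs p hp) hd (differentiableWithinAt_const b)]
    simp
  rw [hsnd, hsnd]
  exact hsymm w z

theorem dirDerivWithin_iterate_comm (hs : UniqueDiffOn ℝ s) (hs' : s ⊆ closure (interior s))
    (hG : ContDiffOn ℝ ∞ G s) (w z : E) (k : ℕ) :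
    EqOn (dirDerivWithin s w ((dirDerivWithin s z)^[k] G))
      ((dirDerivWithin s z)^[k] (dirDerivWithin s w G)) s := by
  induction k with
  | zero => exact fun _ _ => rfl
  | succ k ih =>
    simp only [Function.iterate_succ_apply']
    exact (dirDerivWithin_comm hs hs' (contDiffOn_iterate_dirDerivWithin hs hG z k) w z).trans
      (eqOn_dirDerivWithin ih z)

end DirDerivWithin

section HalfPlane

/-- The image `ρ ≤ η` of the half-plane `t ≥ 1` in null coordinates. -/
def halfPlane : Set (ℝ × ℝ) := {p | p.1 ≤ p.2}

theorem convex_halfPlane : Convex ℝ halfPlane := fun _ hp _ hq _ _ ha hb _ =>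
  add_le_add (mul_le_mul_of_nonneg_left hp ha) (mul_le_mul_of_nonneg_left hq hb)

theorem interior_halfPlane : interior halfPlane = {p | p.1 < p.2} := by
  have hopen : IsOpenMap fun p : ℝ × ℝ => p.1 - p.2 :=
    (ContinuousLinearMap.fst ℝ ℝ ℝ - ContinuousLinearMap.snd ℝ ℝ ℝ).isOpenMap
      fun x => ⟨(x, 0), by simp⟩
  have := hopen.preimage_interior_eq_interior_preimage (by fun_prop) (Iic 0)
  simp only [interior_Iic, preimage, mem_Iio, mem_Iic, sub_neg, sub_nonpos] at this
  exact this.symm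

theorem nonempty_interior_halfPlane : (interior halfPlane).Nonempty :=
  ⟨(0, 1), by simp [interior_halfPlane]⟩

theorem uniqueDiffOn_halfPlane : UniqueDiffOn ℝ halfPlane :=
  uniqueDiffOn_convex convex_halfPlane nonempty_interior_halfPlane

theorem halfPlane_subset_closure_interior : halfPlane ⊆ closure (interior halfPlane) := by
  rw [convex_halfPlane.closure_interior_eq_closure_of_nonempty_interior nonempty_interior_halfPlane]
  exact subset_closure

variable {G g h Φ : ℝ × ℝ → ℂ}

/-- The `ρ`-derivatives of `G` at a point of the half-plane. -/
def rhoJet (G : ℝ × ℝ → ℂ) (p : ℝ × ℝ) (k : ℕ) : ℂ := (dirDerivWithin halfPlane (1, 0))^[k] G p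

theorem rhoJet_succ (G : ℝ × ℝ → ℂ) (k : ℕ) :
    (fun p => rhoJet G p (k + 1)) = dirDerivWithin halfPlane (1, 0) fun p => rhoJet G p k :=
  Function.iterate_succ_apply' _ k G

theorem contDiffOn_rhoJet (hG : ContDiffOn ℝ ∞ G halfPlane) (k : ℕ) :
    ContDiffOn ℝ ∞ (fun p => rhoJet G p k) halfPlane :=
  contDiffOn_iterate_dirDerivWithin uniqueDiffOn_halfPlane hG (1, 0) k

theorem hasDerivWithinAt_rhoJet (hG : ContDiffOn ℝ ∞ G halfPlane) {ρ η : ℝ} (h : ρ ≤ η) (k : ℕ) :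
    HasDerivWithinAt (fun r => rhoJet G (r, η) k) (rhoJet G (ρ, η) (k + 1)) (Iic η) ρ := by
  rw [congr_fun (rhoJet_succ G k) (ρ, η)]
  exact hasDerivWithinAt_comp_curve (γ := fun r => (r, η))
    ((contDiffOn_rhoJet hG k).differentiableOn (by simp))
    ((hasDerivWithinAt_id ρ _).prodMk (hasDerivWithinAt_const ρ _ η)) (fun _ hr => hr) h

theorem hasDerivWithinAt_rhoJet_eta (hG : ContDiffOn ℝ ∞ G halfPlane) {ρ η : ℝ} (h : ρ ≤ η)
    (k : ℕ) : HasDerivWithinAt (fun e => rhoJet G (ρ, e) k)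
      (rhoJet (dirDerivWithin halfPlane (0, 1) G) (ρ, η) k) (Ici ρ) η := by
  have hcomm := dirDerivWithin_iterate_comm uniqueDiffOn_halfPlane halfPlane_subset_closure_interior
    hG (0, 1) (1, 0) k (x := (ρ, η)) h
  rw [rhoJet, ← hcomm]
  exact hasDerivWithinAt_comp_curve (γ := fun e => (ρ, e))
    ((contDiffOn_rhoJet hG k).differentiableOn (by simp))
    ((hasDerivWithinAt_const η _ ρ).prodMk (hasDerivWithinAt_id η _)) (fun _ he => he) h

theorem hasDerivAt_rhoJet_diagonal (hG : ContDiffOn ℝ ∞ G halfPlane) (s : ℝ) (k : ℕ) :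
    HasDerivAt (fun r => rhoJet G (r, r) k)
      (rhoJet G (s, s) (k + 1) + rhoJet (dirDerivWithin halfPlane (0, 1) G) (s, s) k) s := by
  have hcomm := dirDerivWithin_iterate_comm uniqueDiffOn_halfPlane halfPlane_subset_closure_interior
    hG (0, 1) (1, 0) k (x := (s, s)) (le_refl s)
  have hcurve := hasDerivWithinAt_comp_curve (γ := fun r => (r, r))
    ((contDiffOn_rhoJet hG k).differentiableOn (by simp))
    ((hasDerivWithinAt_id s univ).prodMk (hasDerivWithinAt_id s univ)) (fun r _ => le_refl r)
    (mem_univ s)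
  rw [hasDerivWithinAt_univ] at hcurve
  refine hcurve.congr_deriv ?_
  rw [congr_fun (rhoJet_succ G k) (s, s), rhoJet, ← hcomm]
  simp only [dirDerivWithin, rhoJet, ← map_add, Prod.mk_add_mk, add_zero, zero_add]

theorem rhoJet_eq_cubic (hΦ : ContDiffOn ℝ ∞ Φ halfPlane) (hg : ContDiffOn ℝ ∞ g halfPlane)
    (hh : ContDiffOn ℝ ∞ h halfPlane) {c : ℂ}
    (heq : ∀ p ∈ halfPlane, Φ p = c * (g p + g p * conj (g p) * h p)) (k : ℕ) :
    ∀ p ∈ halfPlane, rhoJet Φ p k = c * (rhoJet g p k + cubic (rhoJet g p) (rhoJet h p) k) := by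
  induction k with
  | zero => simpa only [cubic_zero, rhoJet, Function.iterate_zero, id] using heq
  | succ k ih =>
    rintro ⟨ρ, η⟩ hp
    have hρη : ρ ≤ η := hp
    have hcubic := hasDerivWithinAt_cubic (fun k => hasDerivWithinAt_rhoJet hg hρη k)
      (fun k => hasDerivWithinAt_rhoJet hh hρη k) k
    exact (uniqueDiffOn_Iic η ρ hρη).eq_deriv _ (hasDerivWithinAt_rhoJet hΦ hρη k)
      ((((hasDerivWithinAt_rhoJet hg hρη k).add hcubic).const_mul c).congr
        (fun r hr => ih (r, η) hr) (ih (ρ, η) hp))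

/-- The jets of `G`, extended to the whole plane by freezing `η` at the initial line. -/
def extendedJet (G : ℝ × ℝ → ℂ) (ρ η : ℝ) : ℕ → ℂ := rhoJet G (ρ, max ρ η)

theorem extendedJet_of_le {ρ η : ℝ} (h : ρ ≤ η) : extendedJet G ρ η = rhoJet G (ρ, η) := by
  rw [extendedJet, max_eq_right h]

theorem continuous_extendedJet (hG : ContDiffOn ℝ ∞ G halfPlane) (k : ℕ) :
    Continuous fun p : ℝ × ℝ => extendedJet G p.1 p.2 k :=
  (contDiffOn_rhoJet hG k).continuousOn.comp_continuous (by fun_prop) fun p =>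
    le_max_left p.1 p.2

theorem hasDerivAt_extendedJet_rho (hG : ContDiffOn ℝ ∞ G halfPlane) {ρ η : ℝ} (h : ρ < η)
    (k : ℕ) : HasDerivAt (fun r => extendedJet G r η k) (extendedJet G ρ η (k + 1)) ρ := by
  rw [extendedJet_of_le h.le]
  refine ((hasDerivWithinAt_rhoJet hG h.le k).hasDerivAt (Iic_mem_nhds h)).congr_of_eventuallyEq ?_
  filter_upwards [Iic_mem_nhds h] with r hr
  rw [extendedJet_of_le hr]

theorem nullSolution_extendedJet (hg : ContDiffOn ℝ ∞ g halfPlane) (hh : ContDiffOn ℝ ∞ h halfPlane)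
    (heta : ∀ p ∈ halfPlane, dirDerivWithin halfPlane (0, 1) g p =
      Complex.I / 2 * (h p + h p * conj (h p) * g p))
    (hrho : ∀ p ∈ halfPlane, dirDerivWithin halfPlane (1, 0) h p =
      -(Complex.I / 2) * (g p + g p * conj (g p) * h p)) :
    NullSolution (extendedJet g) (extendedJet h) where
  continuous_left := continuous_extendedJet hg
  continuous_right := continuous_extendedJet hh
  hasDerivAt_rho_left k _ _ hlt := hasDerivAt_extendedJet_rho hg hlt k
  hasDerivAt_rho_right k _ _ hlt := hasDerivAt_extendedJet_rho hh hlt k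
  hasDerivAt_eta_left k ρ η hlt := by
    have hjet := rhoJet_eq_cubic (contDiffOn_dirDerivWithin uniqueDiffOn_halfPlane hg (0, 1)) hh hg
      heta k (ρ, η) hlt.le
    rw [extendedJet_of_le hlt.le, extendedJet_of_le hlt.le, ← hjet]
    refine ((hasDerivWithinAt_rhoJet_eta hg hlt.le k).hasDerivAt
      (Ici_mem_nhds hlt)).congr_of_eventuallyEq ?_
    filter_upwards [Ici_mem_nhds hlt] with e he
    rw [extendedJet_of_le he]
  hasDerivAt_diagonal_left k s := by
    have hjet := rhoJet_eq_cubic (contDiffOn_dirDerivWithin uniqueDiffOn_halfPlane hg (0, 1)) hh hg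
      heta k (s, s) (le_refl s)
    simp only [extendedJet_of_le (le_refl _)]
    rw [← hjet]
    exact hasDerivAt_rhoJet_diagonal hg s k
  right_succ k ρ η hle := by
    rw [extendedJet_of_le hle, extendedJet_of_le hle]
    exact rhoJet_eq_cubic (contDiffOn_dirDerivWithin uniqueDiffOn_halfPlane hh (1, 0)) hg hh hrho k
      (ρ, η) hle

end HalfPlane

section NullCoordinates

variable {u v : ℝ → ℝ → ℂ}

/-- The point `(t, x)` with null coordinates `ρ = x - t + 2` and `η = x + t`; the line `t = 1` is
`ρ = η`. -/
def ofNull (p : ℝ × ℝ) : ℝ × ℝ := (1 + (p.2 - p.1) / 2, (p.2 + p.1) / 2 - 1)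

/-- The function `u` in null coordinates. -/
def nullForm (u : ℝ → ℝ → ℂ) (p : ℝ × ℝ) : ℂ := u (ofNull p).1 (ofNull p).2

theorem contDiffOn_nullForm
    (hu : ContDiffOn ℝ ∞ (fun p : ℝ × ℝ => u p.1 p.2) {p : ℝ × ℝ | 1 ≤ p.1}) :
    ContDiffOn ℝ ∞ (nullForm u) halfPlane :=
  hu.comp (g := fun p : ℝ × ℝ => u p.1 p.2) (f := ofNull)
    (by unfold ofNull; fun_prop) fun p (hp : p.1 ≤ p.2) => by
      simp only [ofNull, mem_ofPred_eq]
      linarith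

theorem hasFDerivAt_ofNull (p : ℝ × ℝ) : HasFDerivAt ofNull
    (((2 : ℝ)⁻¹ • (ContinuousLinearMap.snd ℝ ℝ ℝ - ContinuousLinearMap.fst ℝ ℝ ℝ)).prod
      ((2 : ℝ)⁻¹ • (ContinuousLinearMap.snd ℝ ℝ ℝ + ContinuousLinearMap.fst ℝ ℝ ℝ))) p :=
  ((ContinuousLinearMap.hasFDerivAt _).const_add ((1, -1) : ℝ × ℝ)).congr_of_eventuallyEq
    (Eventually.of_forall fun q => by
      ext <;> simp [ofNull] <;> ring)

theorem dirDerivWithin_nullForm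
    (hu : ContDiffOn ℝ ∞ (fun p : ℝ × ℝ => u p.1 p.2) {p : ℝ × ℝ | 1 ≤ p.1}) {p : ℝ × ℝ}
    (hp : p.1 < p.2) (a b : ℝ) :
    dirDerivWithin halfPlane (a, b) (nullForm u) p =
      ((b - a) / 2 : ℝ) • pt u (ofNull p).1 (ofNull p).2 +
        ((b + a) / 2 : ℝ) • px u (ofNull p).1 (ofNull p).2 := by
  set q := ofNull p with hq
  have hq1 : 1 < q.1 := by
    simp only [hq, ofNull]
    linarith
  have hmem : {p : ℝ × ℝ | 1 ≤ p.1} ∈ 𝓝 q :=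
    mem_of_superset ((isOpen_lt continuous_const continuous_fst).mem_nhds hq1)
      fun r (hr : 1 < r.1) => hr.le
  obtain ⟨L, hL⟩ : DifferentiableAt ℝ (fun p : ℝ × ℝ => u p.1 p.2) q :=
    (hu.contDiffAt hmem).differentiableAt (by simp)
  have hpt : pt u q.1 q.2 = L (1, 0) :=
    (hL.comp_hasDerivAt q.1 (f := fun t => (t, q.2))
      ((hasDerivAt_id q.1).prodMk (hasDerivAt_const q.1 q.2))).deriv
  have hpx : px u q.1 q.2 = L (0, 1) :=
    (hL.comp_hasDerivAt q.2 (f := fun x => (q.1, x))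
      ((hasDerivAt_const q.2 q.1).prodMk (hasDerivAt_id q.2))).deriv
  have hchain := (hL.comp p (hasFDerivAt_ofNull p)).hasFDerivWithinAt.fderivWithin
    (uniqueDiffOn_halfPlane p hp.le)
  calc _ = L ((b - a) / 2, (b + a) / 2) := by
        change fderivWithin ℝ ((fun p : ℝ × ℝ => u p.1 p.2) ∘ ofNull) halfPlane p (a, b) = _
        rw [hchain]
        simp [div_eq_inv_mul, mul_add]
    _ = L (((b - a) / 2) • (1, 0) + ((b + a) / 2) • (0, 1)) := by simp
    _ = _ := by rw [map_add, map_smul, map_smul, hpt, hpx]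

theorem nullSolution_nullForm
    (hu : ContDiffOn ℝ ∞ (fun p : ℝ × ℝ => u p.1 p.2) {p : ℝ × ℝ | 1 ≤ p.1})
    (hv : ContDiffOn ℝ ∞ (fun p : ℝ × ℝ => v p.1 p.2) {p : ℝ × ℝ | 1 ≤ p.1})
    (hequ : ∀ t x : ℝ, 1 < t →
      pt u t x + px u t x = Complex.I * v t x + Complex.I * (‖v t x‖ ^ 2 : ℝ) * u t x)
    (heqv : ∀ t x : ℝ, 1 < t →
      pt v t x - px v t x = Complex.I * u t x + Complex.I * (‖u t x‖ ^ 2 : ℝ) * v t x) :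
    NullSolution (extendedJet (nullForm u)) (extendedJet (nullForm v)) := by
  have hg := contDiffOn_nullForm hu
  have hh := contDiffOn_nullForm hv
  have hconj : ∀ {G : ℝ × ℝ → ℂ}, ContinuousOn G halfPlane →
      ContinuousOn (fun p => conj (G p)) halfPlane := Complex.continuous_conj.comp_continuousOn
  have ht : ∀ p : ℝ × ℝ, p ∈ interior halfPlane → p.1 < p.2 ∧ 1 < (ofNull p).1 := fun p hp => by
    rw [interior_halfPlane] at hp
    have hlt : p.1 < p.2 := hp
    refine ⟨hlt, ?_⟩
    simp only [ofNull]
    linarith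
  refine nullSolution_extendedJet hg hh ?_ ?_
  · refine EqOn.of_subset_closure (fun p hp => ?_)
      (contDiffOn_dirDerivWithin uniqueDiffOn_halfPlane hg _).continuousOn
      (continuousOn_const.mul (hh.continuousOn.add
        ((hh.continuousOn.mul (hconj hh.continuousOn)).mul hg.continuousOn)))
      interior_subset halfPlane_subset_closure_interior
    have h := hequ _ (ofNull p).2 (ht p hp).2
    rw [dirDerivWithin_nullForm hu (ht p hp).1, Complex.mul_conj']
    simp only [nullForm, Complex.real_smul]
    push_cast at h ⊢
    linear_combination (1 / 2) * h
  · refine EqOn.of_subset_closure (fun p hp => ?_)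
      (contDiffOn_dirDerivWithin uniqueDiffOn_halfPlane hh _).continuousOn
      (continuousOn_const.mul (hg.continuousOn.add
        ((hg.continuousOn.mul (hconj hg.continuousOn)).mul hh.continuousOn)))
      interior_subset halfPlane_subset_closure_interior
    have h := heqv _ (ofNull p).2 (ht p hp).2
    rw [dirDerivWithin_nullForm hv (ht p hp).1, Complex.mul_conj']
    simp only [nullForm, Complex.real_smul]
    push_cast at h ⊢
    linear_combination (-1 / 2) * h

end NullCoordinates

section JetBigO

variable {ι : Type*} {n : ℕ} {φ ψ : ι → ℝ → ℂ} {w w' : ι × ℝ → ℝ}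

/-- The functions `φ i` are smooth and their derivatives of order at most `n` are `O(w)`, uniformly
in the index `i` and the point `x`. -/
structure JetBigO (n : ℕ) (φ : ι → ℝ → ℂ) (w : ι × ℝ → ℝ) : Prop where
  contDiff : ∀ i, ContDiff ℝ ∞ (φ i)
  isBigO : ∀ k ≤ n, (fun p : ι × ℝ => iteratedDeriv k (φ p.1) p.2) =O[⊤] w

namespace JetBigO

theorem of_le {m : ℕ} (h : JetBigO n φ w) (hm : m ≤ n) : JetBigO m φ w :=
  ⟨h.contDiff, fun k hk => h.isBigO k (hk.trans hm)⟩

theorem trans_isBigO (h : JetBigO n φ w) (hw : w =O[⊤] w') : JetBigO n φ w' :=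
  ⟨h.contDiff, fun k hk => (h.isBigO k hk).trans hw⟩

theorem zero (h : ∀ i, ContDiff ℝ ∞ (φ i)) (hφ : (fun p : ι × ℝ => φ p.1 p.2) =O[⊤] w) :
    JetBigO 0 φ w :=
  ⟨h, fun k hk => by simpa only [Nat.le_zero.1 hk, iteratedDeriv_zero] using hφ⟩

theorem succ (h : ∀ i, ContDiff ℝ ∞ (φ i)) (hφ : (fun p : ι × ℝ => φ p.1 p.2) =O[⊤] w)
    (hd : JetBigO n (fun i => deriv (φ i)) w) : JetBigO (n + 1) φ w := by
  refine ⟨h, fun k hk => ?_⟩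
  rcases k with _ | k
  · simpa only [iteratedDeriv_zero] using hφ
  · simpa only [iteratedDeriv_succ'] using hd.isBigO k (Nat.le_of_succ_le_succ hk)

theorem deriv (h : JetBigO (n + 1) φ w) : JetBigO n (fun i => deriv (φ i)) w :=
  ⟨fun i => (contDiff_infty_iff_deriv.1 (h.contDiff i)).2, fun k hk => by
    simpa only [← iteratedDeriv_succ'] using h.isBigO (k + 1) (Nat.succ_le_succ hk)⟩

theorem add (hφ : JetBigO n φ w) (hψ : JetBigO n ψ w) :
    JetBigO n (fun i x => φ i x + ψ i x) w := by
  refine ⟨fun i => (hφ.contDiff i).add (hψ.contDiff i), fun k hk => ?_⟩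
  refine ((hφ.isBigO k hk).add (hψ.isBigO k hk)).congr_left fun p => ?_
  rw [iteratedDeriv_fun_add ((hφ.contDiff _).contDiffAt.of_le (mod_cast le_top))
    ((hψ.contDiff _).contDiffAt.of_le (mod_cast le_top))]

theorem sum {α : Type*} {s : Finset α} {φ : α → ι → ℝ → ℂ} (h : ∀ a ∈ s, JetBigO n (φ a) w) :
    JetBigO n (fun i x => ∑ a ∈ s, φ a i x) w := by
  refine ⟨fun i => ContDiff.sum fun a ha => (h a ha).contDiff i, fun k hk => ?_⟩
  refine (IsBigO.fun_sum fun a ha => (h a ha).isBigO k hk).congr_left fun p => ?_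
  rw [iteratedDeriv_fun_sum fun a ha => ((h a ha).contDiff _).contDiffAt.of_le (mod_cast le_top)]

theorem const_mul (h : JetBigO n φ w) (c : ℂ) : JetBigO n (fun i x => c * φ i x) w :=
  ⟨fun i => contDiff_const.mul (h.contDiff i), fun k hk => by
    simpa only [iteratedDeriv_const_mul_field] using (h.isBigO k hk).const_mul_left c⟩

theorem mul (hφ : JetBigO n φ w) (hψ : JetBigO n ψ w') :
    JetBigO n (fun i x => φ i x * ψ i x) fun p => w p * w' p := by
  refine ⟨fun i => (hφ.contDiff i).mul (hψ.contDiff i), fun k hk => ?_⟩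
  refine (IsBigO.fun_sum fun j hj => ((hφ.isBigO j ?_).const_mul_left (k.choose j : ℂ)).mul
    (hψ.isBigO (k - j) ?_)).congr_left fun p => (iteratedDeriv_fun_mul
      ((hφ.contDiff _).contDiffAt.of_le (mod_cast le_top))
      ((hψ.contDiff _).contDiffAt.of_le (mod_cast le_top))).symm
  · exact (Finset.mem_range_succ_iff.1 hj).trans hk
  · exact (Nat.sub_le k j).trans hk

theorem comp_conj (h : JetBigO n φ w) : JetBigO n (fun i x => conj (φ i x)) w := by
  refine ⟨fun i => Complex.conjCLE.contDiff.comp (h.contDiff i), fun k hk => ?_⟩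
  refine ((h.isBigO k hk).norm_left.congr_left fun p => ?_).of_norm_left
  have := Complex.conjLIE.norm_iteratedFDeriv_comp_left (𝕜 := ℝ) (φ p.1) p.2 k
  rw [norm_iteratedFDeriv_eq_norm_iteratedDeriv, norm_iteratedFDeriv_eq_norm_iteratedDeriv] at this
  exact this.symm

theorem comp_sub_const (h : JetBigO n φ w) (c : ℝ) :
    JetBigO n (fun i x => φ i (x - c)) fun p => w (p.1, p.2 - c) := by
  refine ⟨fun i => (h.contDiff i).comp (by fun_prop), fun k hk => ?_⟩
  simp only [iteratedDeriv_comp_sub_const]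
  exact (h.isBigO k hk).comp_tendsto (k := fun p : ι × ℝ => (p.1, p.2 - c)) tendsto_top

theorem leibniz {a b : ι → ℝ → ℕ → ℂ} {j : ℕ} (ha : ∀ k ≤ j, JetBigO n (fun i s => a i s k) w)
    (hb : ∀ k ≤ j, JetBigO n (fun i s => b i s k) w') :
    JetBigO n (fun i s => leibniz (a i s) (b i s) j) fun p => w p * w' p :=
  JetBigO.sum fun kl hkl => ((ha kl.1 (Finset.HasAntidiagonal.antidiagonal.fst_le hkl)).mul
    (hb kl.2 (Finset.HasAntidiagonal.antidiagonal.snd_le hkl))).const_mul _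

theorem cubic {a b : ι → ℝ → ℕ → ℂ} {j : ℕ} (hw : w =O[⊤] fun _ => (1 : ℝ))
    (ha : ∀ k ≤ j, JetBigO n (fun i s => a i s k) w)
    (hb : ∀ k ≤ j, JetBigO n (fun i s => b i s k) w) :
    JetBigO n (fun i s => cubic (a i s) (b i s) j) w := by
  have hcub := JetBigO.leibniz (fun k hk => JetBigO.leibniz (fun l hl => ha l (hl.trans hk))
    fun l hl => (ha l (hl.trans hk)).comp_conj) hb
  refine hcub.trans_isBigO ?_
  simpa only [one_mul] using (hw.mul hw).mul (isBigO_refl w ⊤)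

end JetBigO

end JetBigO

section JapaneseBracket

theorem one_le_jb (x : ℝ) : 1 ≤ jb x :=
  Real.one_le_sqrt.2 (le_add_of_nonneg_right (sq_nonneg x))

theorem jb_pos (x : ℝ) : 0 < jb x := one_pos.trans_le (one_le_jb x)

theorem abs_le_jb (x : ℝ) : |x| ≤ jb x :=
  Real.abs_le_sqrt (le_add_of_nonneg_left zero_le_one)

theorem jb_le_one_add_abs (x : ℝ) : jb x ≤ 1 + |x| :=
  Real.sqrt_le_iff.2 ⟨by positivity, by nlinarith [abs_nonneg x, sq_abs x]⟩

theorem jb_rpow (σ x : ℝ) : jb x ^ σ = (1 + x ^ 2) ^ (σ / 2) := by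
  rw [jb, Real.sqrt_eq_rpow, ← Real.rpow_mul (by positivity)]
  congr 1
  ring

theorem hasDerivAt_jb_rpow (σ x : ℝ) :
    HasDerivAt (fun y => jb y ^ σ) (σ * (x * jb x ^ (σ - 2))) x := by
  have hsq : HasDerivAt (fun y : ℝ => 1 + y ^ 2) (2 * x) x := by
    simpa using ((hasDerivAt_id x).pow 2).const_add 1
  simp only [jb_rpow, sub_div, div_self (two_ne_zero' ℝ)]
  exact (hsq.rpow_const (p := σ / 2) (Or.inl (by positivity))).congr_deriv (by ring)

theorem contDiff_jb_rpow (σ : ℝ) : ContDiff ℝ ∞ fun y => jb y ^ σ := by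
  simp only [jb_rpow]
  exact ContDiff.rpow_const_of_ne (by fun_prop) fun x => by positivity

theorem jb_rpow_neg_le_one {σ : ℝ} (hσ : 0 ≤ σ) (x : ℝ) : jb x ^ (-σ) ≤ 1 :=
  Real.rpow_le_one_of_one_le_of_nonpos (one_le_jb x) (neg_nonpos.2 hσ)

variable {ι : Type*}

theorem jetBigO_ofReal (n : ℕ) : JetBigO n (fun (_ : ι) (x : ℝ) => (x : ℂ)) fun p => jb p.2 := by
  have hsmooth : ∀ _ : ι, ContDiff ℝ ∞ fun x : ℝ => (x : ℂ) := fun _ => Complex.ofRealCLM.contDiff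
  have hbound : (fun p : ι × ℝ => (p.2 : ℂ)) =O[⊤] fun p => jb p.2 :=
    isBigO_of_le _ fun p => by
      simpa only [Complex.norm_real, Real.norm_eq_abs] using
        (abs_le_jb p.2).trans (le_abs_self _)
  have hderiv : deriv (fun x : ℝ => (x : ℂ)) = fun _ => 1 :=
    funext fun x => (hasDerivAt_id x).ofReal_comp.deriv
  refine JetBigO.of_le (.succ hsmooth hbound ⟨fun _ => ?_, fun k _ => ?_⟩) (Nat.le_succ n)
  · simpa only [hderiv] using contDiff_const
  · refine isBigO_of_le _ fun p => ?_
    simp only [hderiv, iteratedDeriv_const]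
    refine le_trans ?_ ((one_le_jb p.2).trans (le_abs_self _))
    split_ifs <;> simp

theorem jetBigO_jb_rpow (n : ℕ) (σ : ℝ) :
    JetBigO n (fun (_ : ι) x => ((jb x ^ σ : ℝ) : ℂ)) fun p => jb p.2 ^ σ := by
  have hsmooth : ∀ (σ : ℝ) (_ : ι), ContDiff ℝ ∞ fun x : ℝ => ((jb x ^ σ : ℝ) : ℂ) := fun σ _ =>
    Complex.ofRealCLM.contDiff.comp (contDiff_jb_rpow σ)
  have hbound : ∀ σ : ℝ, (fun p : ι × ℝ => ((jb p.2 ^ σ : ℝ) : ℂ)) =O[⊤] fun p => jb p.2 ^ σ :=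
    fun σ => isBigO_of_le _ fun p => by rw [Complex.norm_real]
  induction n generalizing σ with
  | zero => exact .zero (hsmooth σ) (hbound σ)
  | succ n ih =>
    have hderiv : deriv (fun x : ℝ => ((jb x ^ σ : ℝ) : ℂ)) =
        fun x : ℝ => (σ : ℂ) * ((x : ℂ) * ((jb x ^ (σ - 2) : ℝ) : ℂ)) := by
      ext x
      rw [(hasDerivAt_jb_rpow σ x).ofReal_comp.deriv]
      push_cast
      rfl
    refine .succ (hsmooth σ) (hbound σ) ?_
    simp only [hderiv]
    refine (((jetBigO_ofReal n).mul (ih (σ - 2))).const_mul σ).trans_isBigO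
      (isBigO_of_le _ fun p => ?_)
    have hj := jb_pos p.2
    rw [Real.norm_of_nonneg (by positivity), Real.norm_of_nonneg (by positivity), mul_comm,
      ← Real.rpow_add_one hj.ne']
    exact Real.rpow_le_rpow_of_exponent_le (one_le_jb p.2) (by linarith)

theorem rpow_neg_half_sq_mul_pow {y : ℝ} (hy : 0 < y) (n : ℕ) :
    (y ^ (-(n : ℝ) / 2)) ^ 2 * y ^ n = 1 := by
  rw [← Real.rpow_mul_natCast hy.le, ← Real.rpow_natCast y n, ← Real.rpow_add hy]
  norm_num

end JapaneseBracket

section Sobolev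

section

variable {E : Type*} [NormedAddCommGroup E] [InnerProductSpace ℝ E]

theorem norm_sq_le_integral_add_integral (g : 𝓢(ℝ, E)) (x : ℝ) :
    ‖g x‖ ^ 2 ≤ (∫ y, ‖g y‖ ^ 2) + ∫ y, ‖deriv g y‖ ^ 2 := by
  have hg : Integrable fun y => ‖g y‖ ^ 2 := (g.memLp 2).integrable_norm_pow two_ne_zero
  have hg' : Integrable fun y => ‖deriv g y‖ ^ 2 :=
    ((SchwartzMap.derivCLM ℝ E g).memLp 2 volume).integrable_norm_pow two_ne_zero
  have hlim : Tendsto (fun T => ‖g T‖ ^ 2 + ∫ y, (‖g y‖ ^ 2 + ‖deriv g y‖ ^ 2)) atTop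
      (𝓝 (0 + ∫ y, (‖g y‖ ^ 2 + ‖deriv g y‖ ^ 2))) := by
    have : Tendsto g atTop (𝓝 0) :=
      g.toZeroAtInfty.zero_at_infty'.mono_left atTop_le_cocompact
    simpa using (this.norm.pow 2).add_const (∫ y, (‖g y‖ ^ 2 + ‖deriv g y‖ ^ 2))
  rw [← integral_add hg hg', ← zero_add (∫ y, _)]
  refine ge_of_tendsto hlim ((eventually_ge_atTop x).mono fun T hT => ?_)
  refine (norm_sq_le_norm_sq_add_integral hT g.continuous
    (SchwartzMap.derivCLM ℝ E g).continuous fun s _ => g.hasDerivAt s).trans ?_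
  gcongr
  rw [intervalIntegral.integral_of_le hT]
  exact setIntegral_le_integral (hg.add hg') (Eventually.of_forall fun y => by positivity)

theorem coe_iterate_derivCLM (g : 𝓢(ℝ, E)) (j : ℕ) :
    ⇑((SchwartzMap.derivCLM ℝ E)^[j] g) = deriv^[j] g := by
  induction j with
  | zero => rfl
  | succ j ih =>
    rw [Function.iterate_succ_apply', Function.iterate_succ_apply', ← ih]
    rfl

end

theorem norm_iteratedDeriv_le_sobNorm (g : 𝓢(ℝ, ℂ)) {j k : ℕ} (h : j < k) (x : ℝ) :
    ‖iteratedDeriv j g x‖ ≤ sobNorm k g := by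
  have hsob := norm_sq_le_integral_add_integral ((SchwartzMap.derivCLM ℝ ℂ)^[j] g) x
  rw [coe_iterate_derivCLM, ← Function.iterate_succ_apply' (f := deriv)] at hsob
  rw [iteratedDeriv_eq_iterate]
  refine Real.le_sqrt_of_sq_le (hsob.trans ?_)
  rw [← Finset.sum_pair (f := fun i => ∫ y, ‖deriv^[i] g y‖ ^ 2) (Nat.lt_succ_self j).ne]
  refine Finset.sum_le_sum_of_subset_of_nonneg (fun i hi => ?_) fun _ _ _ =>
    integral_nonneg fun _ => by positivity
  simp only [Finset.mem_insert, Finset.mem_singleton] at hi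
  exact Finset.mem_range.2 (by omega)

theorem wSobNorm_nonneg (σ : ℝ) (k : ℕ) (f : ℝ → ℂ) : 0 ≤ wSobNorm σ k f := Real.sqrt_nonneg _

/-- Multiplication of a Schwartz function by `⟨x⟩ ^ σ`. -/
def jbMul (σ : ℝ) (f : 𝓢(ℝ, ℂ)) : 𝓢(ℝ, ℂ) :=
  SchwartzMap.smulLeftCLM ℂ (fun x : ℝ => (1 + ‖x‖ ^ 2) ^ (σ / 2)) f

theorem coe_jbMul (σ : ℝ) (f : 𝓢(ℝ, ℂ)) :
    ⇑(jbMul σ f) = fun x => ((jb x ^ σ : ℝ) : ℂ) * f x := by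
  ext x
  rw [jbMul, SchwartzMap.smulLeftCLM_apply_apply
    (Function.hasTemperateGrowth_one_add_norm_sq_rpow ℝ (σ / 2)), jb_rpow, Real.norm_eq_abs, sq_abs,
    Complex.real_smul]

theorem jetBigO_wSobNorm {ι : Type*} (n : ℕ) (σ : ℝ) (f : ι → 𝓢(ℝ, ℂ)) :
    JetBigO n (fun i => f i) fun p => wSobNorm σ (n + 1) (f p.1) * jb p.2 ^ (-σ) := by
  have hweighted : JetBigO n (fun i => jbMul σ (f i)) fun p => wSobNorm σ (n + 1) (f p.1) := by
    refine ⟨fun i => (jbMul σ (f i)).smooth _, fun k hk => isBigO_of_le _ fun p => ?_⟩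
    rw [Real.norm_of_nonneg (wSobNorm_nonneg _ _ _), wSobNorm, ← coe_jbMul]
    exact norm_iteratedDeriv_le_sobNorm _ (Nat.lt_succ_of_le hk) _
  have hcancel : (fun i x => jbMul σ (f i) x * ((jb x ^ (-σ) : ℝ) : ℂ)) = fun i => ⇑(f i) := by
    ext i x
    rw [coe_jbMul, mul_right_comm, ← Complex.ofReal_mul, ← Real.rpow_add (jb_pos x), add_neg_cancel,
      Real.rpow_zero, Complex.ofReal_one, one_mul]
  rw [← hcancel]
  exact hweighted.mul (jetBigO_jb_rpow n (-σ))

end Sobolev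

section Data

variable {ι : Type*} {M : ℕ} {w : ι × ℝ → ℝ} {U V : ι → ℝ → ℝ → ℕ → ℂ}

/-- Each derivative in `ρ` costs one derivative along the initial line. -/
theorem jetBigO_diagonal (hU : ∀ i, NullSolution (U i) (V i)) (hw : w =O[⊤] fun _ => (1 : ℝ))
    (hU0 : JetBigO M (fun i s => U i s s 0) w) (hV0 : JetBigO M (fun i s => V i s s 0) w)
    (j : ℕ) : ∀ n, j + n ≤ M →
      JetBigO n (fun i s => U i s s j) w ∧ JetBigO n (fun i s => V i s s j) w := by
  induction j using Nat.strong_induction_on with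
  | _ j ih =>
  intro n hn
  rcases j with _ | j
  · exact ⟨hU0.of_le (by omega), hV0.of_le (by omega)⟩
  have hUj : ∀ k ≤ j, JetBigO n (fun i s => U i s s k) w := fun k hk =>
    (ih k (by omega) n (by omega)).1
  have hVj : ∀ k ≤ j, JetBigO n (fun i s => V i s s k) w := fun k hk =>
    (ih k (by omega) n (by omega)).2
  have hUsucc : (fun i s => U i s s (j + 1)) = fun i s => deriv (fun r => U i r r j) s +
      -(Complex.I / 2) * (V i s s j + cubic (V i s s) (U i s s) j) := by
    ext i s
    rw [((hU i).hasDerivAt_diagonal_left j s).deriv]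
    ring
  have hVsucc : (fun i s => V i s s (j + 1)) = fun i s =>
      -(Complex.I / 2) * (U i s s j + cubic (U i s s) (V i s s) j) :=
    funext₂ fun i s => (hU i).right_succ j s s le_rfl
  rw [hUsucc, hVsucc]
  exact ⟨(ih j (Nat.lt_succ_self j) (n + 1) (by omega)).1.deriv.add
      (((hVj j le_rfl).add (.cubic hw hVj hUj)).const_mul _),
    ((hUj j le_rfl).add (.cubic hw hUj hVj)).const_mul _⟩

theorem exists_norm_diagonal_le (hU : ∀ i, NullSolution (U i) (V i))
    (hw : w =O[⊤] fun _ => (1 : ℝ)) (hU0 : JetBigO M (fun i s => U i s s 0) w)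
    (hV0 : JetBigO M (fun i s => V i s s 0) w) :
    ∃ c > 0, ∀ i s, ∀ j ≤ M, ‖U i s s j‖ ≤ c * ‖w (i, s)‖ ∧ ‖V i s s j‖ ≤ c * ‖w (i, s)‖ := by
  have hjet : (fun (p : ι × ℝ) (j : Fin (M + 1)) =>
      (U p.1 p.2 p.2 (j : ℕ), V p.1 p.2 p.2 (j : ℕ))) =O[⊤] w := by
    refine isBigO_pi.2 fun j => ?_
    obtain ⟨hUj, hVj⟩ := jetBigO_diagonal hU hw hU0 hV0 j 0 (by omega)
    simpa only [iteratedDeriv_zero] using (hUj.isBigO 0 le_rfl).prod_left (hVj.isBigO 0 le_rfl)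
  obtain ⟨c, hc, hbound⟩ := hjet.exists_pos
  refine ⟨c, hc, fun i s j hj => ?_⟩
  have hpair := (norm_le_pi_norm _ (⟨j, Nat.lt_succ_of_le hj⟩ : Fin (M + 1))).trans
    (isBigOWith_top.1 hbound (i, s))
  exact ⟨(norm_fst_le _).trans hpair, (norm_snd_le _).trans hpair⟩

theorem dataDecay_of_norm_le {N : ℕ} {U V : ℝ → ℝ → ℕ → ℂ} {c D : ℝ}
    (h : ∀ s, ∀ j ≤ N + 3, ‖U s s j‖ ≤ c * ‖D * jb (s - 1) ^ (-(3 + (N : ℝ) / 2))‖ ∧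
      ‖V s s j‖ ≤ c * ‖D * jb (s - 1) ^ (-(3 + (N : ℝ) / 2))‖) :
    DataDecay N (c * √(2 ^ (N + 6)) * D) U V := by
  have hbound : ∀ s : ℝ, 1 ≤ s → ∀ z : ℂ, ‖z‖ ≤ c * ‖D * jb (s - 1) ^ (-(3 + (N : ℝ) / 2))‖ →
      ‖z‖ ^ 2 * s ^ (N + 6) ≤ (c * √(2 ^ (N + 6)) * D) ^ 2 := fun s hs z hz => by
    have hj := one_le_jb (s - 1)
    have hsj : s ≤ 2 * jb (s - 1) := by linarith [(le_abs_self _).trans (abs_le_jb (s - 1))]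
    have hpow := rpow_neg_half_sq_mul_pow (jb_pos (s - 1)) (N + 6)
    rw [show -((N + 6 : ℕ) : ℝ) / 2 = -(3 + (N : ℝ) / 2) by push_cast; ring] at hpow
    calc ‖z‖ ^ 2 * s ^ (N + 6)
        ≤ (c * ‖D * jb (s - 1) ^ (-(3 + (N : ℝ) / 2))‖) ^ 2 * (2 * jb (s - 1)) ^ (N + 6) := by
          gcongr
      _ = c ^ 2 * 2 ^ (N + 6) * D ^ 2 *
          ((jb (s - 1) ^ (-(3 + (N : ℝ) / 2))) ^ 2 * jb (s - 1) ^ (N + 6)) := by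
          rw [mul_pow, Real.norm_eq_abs, sq_abs]
          ring
      _ = (c * √(2 ^ (N + 6)) * D) ^ 2 := by
          rw [hpow, mul_pow, mul_pow, Real.sq_sqrt (by positivity), mul_one]
  exact fun s hs j hj => ⟨hbound s hs _ (h s j hj).1, hbound s hs _ (h s j hj).2⟩

theorem exists_dataDecay (N : ℕ) {f g : ι → 𝓢(ℝ, ℂ)} {D : ι → ℝ}
    (hU : ∀ i, NullSolution (U i) (V i)) (hU0 : ∀ i s, U i s s 0 = f i (s - 1))
    (hV0 : ∀ i s, V i s s 0 = g i (s - 1))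
    (hf : ∀ i, wSobNorm (3 + (N : ℝ) / 2) (N + 4) (f i) ≤ D i)
    (hg : ∀ i, wSobNorm (3 + (N : ℝ) / 2) (N + 4) (g i) ≤ D i) (hD : ∀ i, D i ≤ 1) :
    ∃ C > 0, ∀ i, DataDecay N (C * D i) (U i) (V i) := by
  set σ : ℝ := 3 + (N : ℝ) / 2
  have hσ : 0 ≤ σ := by positivity
  have hD0 : ∀ i, 0 ≤ D i := fun i => (wSobNorm_nonneg _ _ _).trans (hf i)
  have hjet : ∀ h : ι → 𝓢(ℝ, ℂ), (∀ i, wSobNorm σ (N + 4) (h i) ≤ D i) →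
      JetBigO (N + 3) (fun i s => h i (s - 1)) fun p => D p.1 * jb (p.2 - 1) ^ (-σ) :=
    fun h hh => ((jetBigO_wSobNorm (N + 3) σ h).comp_sub_const 1).trans_isBigO <|
      isBigO_of_le _ fun p => by
        have := jb_pos (p.2 - 1)
        have := wSobNorm_nonneg σ (N + 4) (h p.1)
        rw [norm_mul, norm_mul, Real.norm_of_nonneg this, Real.norm_of_nonneg (hD0 _)]
        gcongr
        exact hh p.1
  have hw : (fun p : ι × ℝ => D p.1 * jb (p.2 - 1) ^ (-σ)) =O[⊤] fun _ => (1 : ℝ) :=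
    isBigO_of_le _ fun p => by
      have hj := jb_pos (p.2 - 1)
      rw [Real.norm_of_nonneg (mul_nonneg (hD0 _) (by positivity)), norm_one]
      exact mul_le_one₀ (hD _) (by positivity) (jb_rpow_neg_le_one hσ _)
  obtain ⟨c, hc, hbound⟩ := exists_norm_diagonal_le hU hw
    (by simpa only [hU0] using hjet f hf) (by simpa only [hV0] using hjet g hg)
  exact ⟨c * √(2 ^ (N + 6)), by positivity, fun i => dataDecay_of_norm_le (hbound i)⟩

end Data

section SmoothSolution

/-- Smooth solutions on `[1, ∞) × ℝ`. The equations are imposed for `t > 1` only: at `t = 1` the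
two-sided derivative `pt` also depends on the values at times `t < 1`. -/
structure SmoothSolution (u v : ℝ → ℝ → ℂ) : Prop where
  contDiffOn_left : ContDiffOn ℝ ∞ (fun p : ℝ × ℝ => u p.1 p.2) {p | 1 ≤ p.1}
  contDiffOn_right : ContDiffOn ℝ ∞ (fun p : ℝ × ℝ => v p.1 p.2) {p | 1 ≤ p.1}
  eq_left : ∀ t x, 1 < t →
    pt u t x + px u t x = Complex.I * v t x + Complex.I * (‖v t x‖ ^ 2 : ℝ) * u t x
  eq_right : ∀ t x, 1 < t →
    pt v t x - px v t x = Complex.I * u t x + Complex.I * (‖u t x‖ ^ 2 : ℝ) * v t x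

theorem px_comp_neg (u : ℝ → ℝ → ℂ) (t x : ℝ) : px (fun t x => u t (-x)) t x = -px u t (-x) :=
  deriv_comp_neg (u t) x

theorem contDiffOn_comp_neg {u : ℝ → ℝ → ℂ}
    (hu : ContDiffOn ℝ ∞ (fun p : ℝ × ℝ => u p.1 p.2) {p | 1 ≤ p.1}) :
    ContDiffOn ℝ ∞ (fun p : ℝ × ℝ => u p.1 (-p.2)) {p | 1 ≤ p.1} :=
  hu.comp (f := fun p : ℝ × ℝ => (p.1, -p.2)) (by fun_prop) fun _ hp => hp

theorem SmoothSolution.reflect {u v : ℝ → ℝ → ℂ} (h : SmoothSolution u v) :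
    SmoothSolution (fun t x => v t (-x)) (fun t x => u t (-x)) where
  contDiffOn_left := contDiffOn_comp_neg h.contDiffOn_right
  contDiffOn_right := contDiffOn_comp_neg h.contDiffOn_left
  eq_left t x ht := by
    rw [px_comp_neg, ← h.eq_right t (-x) ht]
    rfl
  eq_right t x ht := by
    rw [px_comp_neg, ← h.eq_left t (-x) ht, sub_neg_eq_add]
    rfl

theorem jb_neg (x : ℝ) : jb (-x) = jb x := by rw [jb, neg_sq, jb]

theorem sobNorm_comp_neg (k : ℕ) (f : ℝ → ℂ) : sobNorm k (fun x => f (-x)) = sobNorm k f := by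
  have hnorm : ∀ j x, ‖deriv^[j] (fun y => f (-y)) x‖ = ‖deriv^[j] f (-x)‖ := fun j x => by
    rw [← iteratedDeriv_eq_iterate, ← iteratedDeriv_eq_iterate, iteratedDeriv_comp_neg, norm_smul,
      norm_pow, norm_neg, norm_one, one_pow, one_mul]
  simp only [sobNorm, hnorm]
  exact congrArg Real.sqrt (Finset.sum_congr rfl fun j _ =>
    integral_neg_eq_self (fun x => ‖deriv^[j] f x‖ ^ 2) volume)

theorem wSobNorm_comp_neg (σ : ℝ) (k : ℕ) (f : ℝ → ℂ) :
    wSobNorm σ k (fun x => f (-x)) = wSobNorm σ k f := by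
  simpa only [wSobNorm, jb_neg] using sobNorm_comp_neg k fun x => ((jb x ^ σ : ℝ) : ℂ) * f x

theorem norm_le_mul_rpow_neg_half {z : ℂ} {y K : ℝ} {n : ℕ} (hy : 0 < y) (hK : 0 ≤ K)
    (h : ‖z‖ ^ 2 * y ^ n ≤ K ^ 2) : ‖z‖ ≤ K * y ^ (-(n : ℝ) / 2) := by
  refine le_of_sq_le_sq ?_ (by positivity)
  calc ‖z‖ ^ 2 = ‖z‖ ^ 2 * y ^ n * (y ^ (-(n : ℝ) / 2)) ^ 2 := by
        rw [mul_assoc, mul_comm (y ^ n), rpow_neg_half_sq_mul_pow hy, mul_one]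
    _ ≤ (K * y ^ (-(n : ℝ) / 2)) ^ 2 := by
        rw [mul_pow]
        gcongr

/-- The size of the initial data in the theorem. -/
def dataNorm (N : ℕ) (f g : ℝ → ℂ) : ℝ :=
  wSobNorm (3 + (N : ℝ) / 2) (N + 4) f + wSobNorm (3 + (N : ℝ) / 2) (N + 4) g

theorem dataNorm_nonneg (N : ℕ) (f g : ℝ → ℂ) : 0 ≤ dataNorm N f g :=
  add_nonneg (wSobNorm_nonneg _ _ _) (wSobNorm_nonneg _ _ _)

theorem SmoothSolution.nullSolution {u v : ℝ → ℝ → ℂ} (h : SmoothSolution u v) :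
    NullSolution (extendedJet (nullForm u)) (extendedJet (nullForm v)) :=
  nullSolution_nullForm h.contDiffOn_left h.contDiffOn_right h.eq_left h.eq_right

theorem extendedJet_nullForm_zero (u : ℝ → ℝ → ℂ) (s : ℝ) :
    extendedJet (nullForm u) s s 0 = u 1 (s - 1) := by
  rw [extendedJet_of_le le_rfl]
  simp only [rhoJet, Function.iterate_zero, id, nullForm, ofNull, sub_self, zero_div, add_zero,
    add_self_div_two]

theorem exists_dataDecay_nullForm (N : ℕ) : ∃ C > 0, ∀ (u v : ℝ → ℝ → ℂ) (f g : 𝓢(ℝ, ℂ)),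
    SmoothSolution u v → u 1 = f → v 1 = g → dataNorm N f g ≤ 1 →
      DataDecay N (C * dataNorm N f g) (extendedJet (nullForm u)) (extendedJet (nullForm v)) := by
  let ι := {q : (ℝ → ℝ → ℂ) × (ℝ → ℝ → ℂ) × 𝓢(ℝ, ℂ) × 𝓢(ℝ, ℂ) //
    SmoothSolution q.1 q.2.1 ∧ q.1 1 = q.2.2.1 ∧ q.2.1 1 = q.2.2.2 ∧
      dataNorm N q.2.2.1 q.2.2.2 ≤ 1}
  obtain ⟨C, hC, hdecay⟩ := exists_dataDecay (ι := ι) N (f := fun q => q.1.2.2.1)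
    (g := fun q => q.1.2.2.2) (D := fun q => dataNorm N q.1.2.2.1 q.1.2.2.2)
    (fun q => q.2.1.nullSolution)
    (fun q s => by rw [extendedJet_nullForm_zero, q.2.2.1])
    (fun q s => by rw [extendedJet_nullForm_zero, q.2.2.2.1])
    (fun q => le_add_of_nonneg_right (wSobNorm_nonneg _ _ _))
    (fun q => le_add_of_nonneg_left (wSobNorm_nonneg _ _ _)) fun q => q.2.2.2.2
  exact ⟨C, hC, fun u v f g h hf hg hD => hdecay ⟨(u, v, f, g), h, hf, hg, hD⟩⟩

theorem SmoothSolution.norm_add_norm_le_of_nonneg {N : ℕ} {u v : ℝ → ℝ → ℂ} {D t x : ℝ}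
    (h : SmoothSolution u v) (hN : 1 ≤ N)
    (hdata : DataDecay N D (extendedJet (nullForm u)) (extendedJet (nullForm v))) (hD : 0 ≤ D)
    (hsmall : (decayConst N 1 + 1) * D ^ 2 < threshold N) (hx : 0 ≤ x) (ht : 1 ≤ t)
    (htx : t ≤ jb x) :
    ‖u t x‖ + ‖v t x‖ ≤ 2 * √(decayConst N N) * D * jb x ^ (-(N : ℝ) / 2) := by
  have hjb : jb x ≤ 1 + x := by simpa only [abs_of_nonneg hx] using jb_le_one_add_abs x
  have hρ : 1 ≤ x - t + 2 := by linarith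
  have hρη : x - t + 2 ≤ x + t := by linarith
  have hη : jb x ≤ x + t := by linarith
  have hnull : ∀ w : ℝ → ℝ → ℂ,
      extendedJet (nullForm w) (x - t + 2) (x + t) 0 = w t x := fun w => by
    rw [extendedJet_of_le hρη]
    simp only [rhoJet, Function.iterate_zero, id, nullForm, ofNull]
    congr 1 <;> ring
  have hsqrt : decayConst N N * D ^ 2 = (√(decayConst N N) * D) ^ 2 := by
    rw [mul_pow, Real.sq_sqrt (show 0 ≤ decayConst N N from sq_nonneg _)]
  have hbound : ∀ w : ℝ → ℝ → ℂ, ‖w t x‖ ^ 2 * (x + t) ^ N ≤ decayConst N N * D ^ 2 →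
      ‖w t x‖ ≤ √(decayConst N N) * D * jb x ^ (-(N : ℝ) / 2) := fun w hw => by
    have hj := jb_pos x
    refine norm_le_mul_rpow_neg_half hj (by positivity) (hsqrt ▸ le_trans ?_ hw)
    gcongr
  obtain ⟨hu, hv⟩ := h.nullSolution.norm_sq_mul_pow_le hN hdata hD hsmall hρ hρη
  rw [hnull] at hu hv
  linarith [hbound u hu, hbound v hv]

theorem exists_norm_add_norm_le_of_nonneg (N : ℕ) (hN : 1 ≤ N) :
    ∃ ε > 0, ∃ C > 0, ∀ (u v : ℝ → ℝ → ℂ) (f g : 𝓢(ℝ, ℂ)),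
      SmoothSolution u v → u 1 = f → v 1 = g → dataNorm N f g ≤ ε →
        ∀ t x, 0 ≤ x → 1 ≤ t → t ≤ jb x →
          ‖u t x‖ + ‖v t x‖ ≤ C * jb x ^ (-(N : ℝ) / 2) * dataNorm N f g := by
  obtain ⟨K, hK, hdecay⟩ := exists_dataDecay_nullForm N
  have hsmall : ∀ᶠ D in 𝓝 (0 : ℝ), (decayConst N 1 + 1) * (K * D) ^ 2 < threshold N :=
    ContinuousAt.eventually_lt (by fun_prop) continuousAt_const (by simpa using threshold_pos N)
  obtain ⟨δ, hδ, hsmall⟩ := Metric.eventually_nhds_iff.1 hsmall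
  refine ⟨min 1 (δ / 2), by positivity, 2 * √(decayConst N N) * K + 1, by positivity,
    fun u v f g h hf hg hD t x hx ht htx => ?_⟩
  have hD0 := dataNorm_nonneg N f g
  have hDδ : dist (dataNorm N f g) 0 < δ := by
    rw [Real.dist_0_eq_abs, abs_of_nonneg hD0]
    linarith [hD.trans (min_le_right _ _)]
  have hj := jb_pos x
  calc ‖u t x‖ + ‖v t x‖
      ≤ 2 * √(decayConst N N) * (K * dataNorm N f g) * jb x ^ (-(N : ℝ) / 2) :=
        h.norm_add_norm_le_of_nonneg hN (hdecay u v f g h hf hg (hD.trans (min_le_left _ _)))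
          (by positivity) (hsmall hDδ) hx ht htx
    _ = 2 * √(decayConst N N) * K * jb x ^ (-(N : ℝ) / 2) * dataNorm N f g := by ring
    _ ≤ (2 * √(decayConst N N) * K + 1) * jb x ^ (-(N : ℝ) / 2) * dataNorm N f g := by
        gcongr
        exact le_add_of_nonneg_right zero_le_one

theorem iterate_px_apply (u : ℝ → ℝ → ℂ) (b : ℕ) (t : ℝ) : (px^[b] u) t = deriv^[b] (u t) := by
  induction b with
  | zero => rfl
  | succ b ih =>
    rw [Function.iterate_succ_apply', Function.iterate_succ_apply', ← ih]
    rfl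

theorem exists_schwartzMap_eq {u : ℝ → ℝ → ℂ}
    (hu : ContDiffOn ℝ ∞ (fun p : ℝ × ℝ => u p.1 p.2) {p | 1 ≤ p.1}) (h : SchwartzLocUnif u) :
    ∃ f : 𝓢(ℝ, ℂ), u 1 = f := by
  refine ⟨⟨u 1, ?_, fun k n => ?_⟩, rfl⟩
  · exact contDiffOn_univ.1 (hu.comp (f := fun x : ℝ => ((1 : ℝ), x)) (s := univ) (by fun_prop)
      fun x _ => le_refl (1 : ℝ))
  · obtain ⟨C, hC⟩ := h 0 n k 1
    refine ⟨C, fun x => ?_⟩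
    rw [norm_iteratedFDeriv_eq_norm_iteratedDeriv, iteratedDeriv_eq_iterate, ← iterate_px_apply]
    exact hC 1 ⟨le_rfl, le_rfl⟩ x

end SmoothSolution

end Thirring

open Thirring in
theorem cubic_dirac_exterior_decay_general (N : ℕ) (hN : 1 ≤ N) :
    ∃ ε > (0 : ℝ), ∃ C > (0 : ℝ), ∀ (u v : ℝ → ℝ → ℂ) (f g : SchwartzMap ℝ ℂ),
      SmoothSolution u v → u 1 = f → v 1 = g → dataNorm N f g ≤ ε →
        ∀ t x : ℝ, 1 ≤ t → t ≤ jb x →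
          ‖u t x‖ + ‖v t x‖ ≤ C * jb x ^ (-(N : ℝ) / 2) * dataNorm N f g := by
  obtain ⟨ε, hε, C, hC, hright⟩ := exists_norm_add_norm_le_of_nonneg N hN
  refine ⟨ε, hε, C, hC, fun u v f g h hf hg hD t x ht htx => ?_⟩
  rcases le_total 0 x with hx | hx
  · exact hright u v f g h hf hg hD t x hx ht htx
  · let reflect := SchwartzMap.compCLMOfContinuousLinearEquiv ℝ (D := ℝ) (F := ℂ)
      (ContinuousLinearEquiv.neg ℝ)
    have hreflect : ∀ h : SchwartzMap ℝ ℂ, ⇑(reflect h) = fun x => h (-x) := fun _ => rfl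
    have hnorm : dataNorm N (reflect g) (reflect f) = dataNorm N f g := by
      rw [hreflect, hreflect, dataNorm, wSobNorm_comp_neg, wSobNorm_comp_neg, add_comm, dataNorm]
    have hleft := hright _ _ (reflect g) (reflect f) h.reflect (by rw [hg, hreflect])
      (by rw [hf, hreflect]) (hnorm.trans_le hD) t (-x) (neg_nonneg.2 hx) ht (by rwa [jb_neg])
    rwa [hnorm, jb_neg, neg_neg, add_comm] at hleft

/-- exterior decay of small solutions of the Thirring model in the region
1 ≤ t ≤ ⟨x⟩. -/
theorem cubic_dirac_exterior_decay (N : ℕ) (hN : 1 ≤ N) :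
    ∃ ε > (0 : ℝ), ∃ C > (0 : ℝ), ∀ u v : ℝ → ℝ → ℂ,
      ContDiffOn ℝ (⊤ : ℕ∞) (fun p : ℝ × ℝ => u p.1 p.2) {p : ℝ × ℝ | 1 ≤ p.1} →
      ContDiffOn ℝ (⊤ : ℕ∞) (fun p : ℝ × ℝ => v p.1 p.2) {p : ℝ × ℝ | 1 ≤ p.1} →
      SchwartzLocUnif u → SchwartzLocUnif v →
      Thirring u v →
      ∀ D : ℝ,
        D = wSobNorm (3 + (N : ℝ) / 2) (N + 4) (u 1) +
            wSobNorm (3 + (N : ℝ) / 2) (N + 4) (v 1) →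
        D ≤ ε →
        ∀ t x : ℝ, 1 ≤ t → t ≤ jb x →
          ‖u t x‖ + ‖v t x‖ ≤ C * jb x ^ (-(N : ℝ) / 2) * D := by
  obtain ⟨ε, hε, C, hC, hdecay⟩ := cubic_dirac_exterior_decay_general N hN
  refine ⟨ε, hε, C, hC, ?_⟩
  rintro u v hu hv su sv huv D rfl
  obtain ⟨f, hf⟩ := Thirring.exists_schwartzMap_eq hu su
  obtain ⟨g, hg⟩ := Thirring.exists_schwartzMap_eq hv sv
  rw [hf, hg]
  exact hdecay u v f g ⟨hu, hv, fun t x ht => (huv t x ht.le).1, fun t x ht => (huv t x ht.le).2⟩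
    hf hg
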